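/- arXiv:2604.01046 — 6 statements merged into one kernel-verified Lean document; each statement's English description precedes it below -/
import Mathlib

section
/- Let Y be a real Banach space, T̄ > 0, and let φ be a process on Y that is T̄-periodic in time. If X⁰ ⊆ Y is a nonempty, compact and convex set such that φ(T̄, 0, x) ∈ X⁰ for every x ∈ X⁰, then there exists a global periodic solution x : ℝ → Y with period T̄; that is, x(t + T̄) = x(t) for every t ∈ ℝ, and φ(t, t₀, x(t₀)) = x(t) for every t₀ ∈ ℝ and every t ≥ t₀. -/
/-! A solution of period `Tbar` is the orbit of a fixed point of the period map `φ Tbar 0`, extended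
to all times by periodicity of the process. The period map is a continuous self-map of a nonempty
compact convex set, so the fixed point comes from Schauder's theorem (`schauder`), which is proved
here from scratch.

The combinatorial core is Scarf's lemma (`exists_full_room`). Given finitely many injective rankings
`r i`, `i ∈ I`, of a finite set `T` and a colouring `T → I`, call `(σ, C)` dominant if no point of
`T` beats the minimum of `σ` in all rankings of `C`. Dominant pairs with `|σ| = |C|` are rooms, those
with `|C| = |σ| + 1` are doors. Every door with `σ ≠ ∅` lies on exactly two rooms
(`door_two_rooms`), the door `(∅, {i₀})` on one, and a room whose set of colours differs from its
index set has zero or two doors of colour `i₀` (`room_even_doors`). Counting incidences modulo two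
yields a room whose colours are exactly its indices.

For Brouwer's theorem on the simplex (`brouwer_stdSimplex`), rank the points of a fine grid by their
coordinates and colour each point by a coordinate that the map does not decrease. Dominance forces
the points of `σ` to be close to each other, with small coordinates outside `C`; so near `σ` the map
decreases no coordinate by much, hence moves points little, and compactness gives a fixed point.
Schauder's theorem follows by projecting onto the convex hulls of finite `ε`-nets.
-/

namespace PeriodicOrbit
open Finset

/-! ### Scarf's lemma -/

variable {T I : Type*}

/-- The pair `(σ, C)` is dominant for the rankings `r i`, `i ∈ I`, of `T`: no `y` is strictly above
the `r i`-minimum of `σ` for all `i ∈ C` simultaneously. -/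
def Dominant (r : I → T → ℕ) (σ : Finset T) (C : Finset I) : Prop :=
  ∀ y, ∃ i ∈ C, ∀ x ∈ σ, r i y ≤ r i x

/-- A room `(σ, C)` is incident to a door `(τ, D)` if the door arises from the room by deleting one
element of `σ` or by adding one index to `C`. -/
def Incident (R D : Finset T × Finset I) : Prop :=
  (D.2 = R.2 ∧ ∃ x, x ∉ D.1 ∧ ∀ z, z ∈ R.1 ↔ z = x ∨ z ∈ D.1) ∨
    (R.1 = D.1 ∧ ∃ j, j ∉ R.2 ∧ ∀ z, z ∈ D.2 ↔ z = j ∨ z ∈ R.2)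

/-- A room is a dominant pair `(σ, C)` with `|σ| = |C|`. -/
def IsRoom (r : I → T → ℕ) (R : Finset T × Finset I) : Prop :=
  Dominant r R.1 R.2 ∧ #R.1 = #R.2

/-- A door of colour `i₀` is a dominant pair `(τ, D)` with `|D| = |τ| + 1` whose colours are exactly
the indices in `D` other than `i₀`. -/
def IsDoor [DecidableEq I] (r : I → T → ℕ) (c : T → I) (i₀ : I) (D : Finset T × Finset I) : Prop :=
  Dominant r D.1 D.2 ∧ #D.2 = #D.1 + 1 ∧ i₀ ∈ D.2 ∧ D.1.image c = D.2.erase i₀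

lemma incident_insert [DecidableEq T] {τ : Finset T} {D : Finset I} {x : T} (hx : x ∉ τ) :
    Incident (insert x τ, D) (τ, D) :=
  Or.inl ⟨rfl, x, hx, fun _ => mem_insert⟩

lemma incident_erase [DecidableEq I] {τ : Finset T} {D : Finset I} {e : I} (he : e ∈ D) :
    Incident (τ, D.erase e) (τ, D) := by
  refine Or.inr ⟨rfl, e, notMem_erase _ _, fun z => ?_⟩
  by_cases h : z = e <;> simp [h, he]

section rooms
variable [DecidableEq T] [DecidableEq I]
variable {r : I → T → ℕ}

/-- On one side `e` of a door: if the elements of `τ` are the minima of the rankings in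
`D.erase e`, one for each, then there is exactly one incident room in which `e` is dropped, or `e`
is the ranking whose minimum is the new element. -/
lemma exists_unique_side [Fintype T] (hr : ∀ i, Function.Injective (r i)) {τ : Finset T}
    {D : Finset I} (hdom : Dominant r τ D) (hcard : #D = #τ + 1) (m : I → T)
    (hm : ∀ i, ∀ x ∈ τ, r i (m i) ≤ r i x) {e : I} (he : e ∈ D)
    (hsurj : (D.erase e).image m = τ) :
    ∃ R : Finset T × Finset I, IsRoom r R ∧
      ((R = (τ, D.erase e)) ∨
        ∃ x, x ∉ τ ∧ R = (insert x τ, D) ∧ ∀ i ∈ D.erase e, r i (m i) < r i x) ∧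
      (IsRoom r (τ, D.erase e) → (τ, D.erase e) = R) ∧
      ∀ x ∉ τ, IsRoom r (insert x τ, D) → (∀ z ∈ τ, r e x ≤ r e z) → (insert x τ, D) = R := by
  have hce : #(D.erase e) = #τ := by rw [card_erase_of_mem he]; omega
  have hinj : Set.InjOn m (D.erase e) := by
    rw [← card_image_iff, hsurj, hce]
  have hmem : ∀ i ∈ D.erase e, m i ∈ τ := fun i hi => hsurj ▸ mem_image_of_mem m hi
  -- a new element that is minimal for `e` must lie strictly above all the other minima
  have key : ∀ x ∉ τ, Dominant r (insert x τ) D → (∀ z ∈ τ, r e x ≤ r e z) →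
      ∀ i ∈ D.erase e, r i (m i) < r i x := by
    intro x hx hd hxe i hi
    obtain ⟨i', hi', h⟩ := hd (m i)
    have hne : i' ≠ e := by
      rintro rfl
      have := hr _ (le_antisymm (h x (mem_insert_self _ _)) (hxe _ (hmem i hi)))
      exact hx (this ▸ hmem i hi)
    have hi'' : i' ∈ D.erase e := mem_erase.2 ⟨hne, hi'⟩
    have h1 : m i' = m i := hr i' (le_antisymm (hm _ _ (hmem i hi))
      (h _ (mem_insert_of_mem (hmem i' hi''))))
    have : i' = i := hinj hi'' hi h1
    subst this
    refine lt_of_le_of_ne (h x (mem_insert_self _ _)) fun h2 => hx ?_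
    exact hr _ h2 ▸ hmem _ hi
  by_cases hM : ∃ y, ∀ i ∈ D.erase e, r i (m i) < r i y
  · classical
    obtain ⟨y, hy, hmax⟩ := (univ.filter fun y => ∀ i ∈ D.erase e, r i (m i) < r i y).exists_max_image
      (r e) (by obtain ⟨y, hy⟩ := hM; exact ⟨y, by simpa using hy⟩)
    simp only [mem_filter, mem_univ, true_and] at hy hmax
    have hyτ : y ∉ τ := by
      intro h
      rw [← hsurj] at h
      obtain ⟨i, hi, rfl⟩ := mem_image.1 h
      exact lt_irrefl _ (hy i hi)
    refine ⟨(insert y τ, D), ⟨?_, ?_⟩, Or.inr ⟨y, hyτ, rfl, hy⟩, ?_, ?_⟩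
    · intro z
      by_cases hz : ∀ i ∈ D.erase e, r i (m i) < r i z
      · refine ⟨e, he, fun x hx => ?_⟩
        rcases mem_insert.1 hx with rfl | hx
        · exact hmax z hz
        · obtain ⟨i, hi, h⟩ := hdom z
          by_cases hie : i = e
          · exact hie ▸ h x hx
          · have hi' : i ∈ D.erase e := mem_erase.2 ⟨hie, hi⟩
            exact absurd (hz i hi') (not_lt.2 (h _ (hmem i hi')))
      · push Not at hz
        obtain ⟨i, hi, h⟩ := hz
        refine ⟨i, mem_of_mem_erase hi, fun x hx => ?_⟩
        rcases mem_insert.1 hx with rfl | hx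
        · exact h.trans (hy i hi).le
        · exact h.trans (hm i x hx)
    · simp [card_insert_of_notMem hyτ, hcard]
    · rintro ⟨h, -⟩
      obtain ⟨i, hi, h⟩ := h y
      exact absurd (hy i hi) (not_lt.2 (h _ (hmem i hi)))
    · intro x hx hR hxe
      have hxM := key x hx hR.1 hxe
      suffices x = y by rw [this]
      apply hr e
      refine le_antisymm (hmax x hxM) ?_
      obtain ⟨i, hi, h⟩ := hR.1 y
      by_cases hie : i = e
      · exact hie ▸ h x (mem_insert_self _ _)
      · have hi' : i ∈ D.erase e := mem_erase.2 ⟨hie, hi⟩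
        exact absurd (hy i hi') (not_lt.2 (h _ (mem_insert_of_mem (hmem i hi'))))
  · refine ⟨(τ, D.erase e), ⟨?_, hce.symm⟩, Or.inl rfl, fun _ => rfl, ?_⟩
    · intro y
      push Not at hM
      obtain ⟨i, hi, h⟩ := hM y
      exact ⟨i, hi, fun x hx => h.trans (hm i x hx)⟩
    · intro x hx hR hxe
      exact absurd ⟨x, key x hx hR.1 hxe⟩ hM

lemma incident_cases {τ σ : Finset T} {C D : Finset I} (h : Incident (σ, C) (τ, D)) :
    (C = D ∧ ∃ x ∉ τ, σ = insert x τ) ∨ (σ = τ ∧ ∃ j ∈ D, C = D.erase j) := by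
  rcases h with ⟨h, x, hx, hz⟩ | ⟨h, j, hj, hz⟩
  · exact Or.inl ⟨h.symm, x, hx, by ext z; simpa using hz z⟩
  · refine Or.inr ⟨h, j, (hz j).2 (Or.inl rfl), ?_⟩
    ext z
    have := hz z
    simp only [mem_erase] at *
    constructor
    · exact fun h => ⟨by rintro rfl; exact hj h, this.2 (Or.inr h)⟩
    · rintro ⟨h1, h2⟩; exact (this.1 h2).resolve_left h1

/-- A dominant pair with `|D| = |τ| + 1` and `τ ≠ ∅` belongs to exactly two rooms: exactly two
rankings `a`, `b` in `D` share their minimum on `τ`, and there is one room on each side. -/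
lemma door_two_rooms [Fintype T] (hr : ∀ i, Function.Injective (r i)) {τ : Finset T}
    {D : Finset I} (hdom : Dominant r τ D) (hcard : #D = #τ + 1) (hτ : τ.Nonempty) :
    ∃ R R' : Finset T × Finset I, R ≠ R' ∧
      ∀ Q, (IsRoom r Q ∧ Incident Q (τ, D)) ↔ Q = R ∨ Q = R' := by
  choose m hmτ hm using fun i => τ.exists_min_image (r i) hτ
  have hmin : ∀ i x, x ∈ τ → (∀ z ∈ τ, r i x ≤ r i z) → m i = x := fun i x hx h =>
    hr i (le_antisymm (hm i x hx) (h _ (hmτ i)))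
  have himg : D.image m = τ := by
    ext x
    constructor
    · intro h; obtain ⟨i, -, rfl⟩ := mem_image.1 h; exact hmτ i
    · intro hx
      obtain ⟨i, hi, h⟩ := hdom x
      exact mem_image.2 ⟨i, hi, hmin i x hx h⟩
  obtain ⟨a, ha, b, hb, hab, hmab⟩ : ∃ a ∈ D, ∃ b ∈ D, a ≠ b ∧ m a = m b :=
    exists_ne_map_eq_of_card_lt_of_maps_to (t := τ) (by omega) (fun i _ => hmτ i)
  have hsa : (D.erase a).image m = τ := by
    refine Subset.antisymm (by intro x h; obtain ⟨i, -, rfl⟩ := mem_image.1 h; exact hmτ i) ?_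
    intro x hx
    rw [← himg] at hx
    obtain ⟨i, hi, rfl⟩ := mem_image.1 hx
    by_cases h : i = a
    · exact mem_image.2 ⟨b, mem_erase.2 ⟨hab.symm, hb⟩, by rw [h, hmab]⟩
    · exact mem_image.2 ⟨i, mem_erase.2 ⟨h, hi⟩, rfl⟩
  have hsb : (D.erase b).image m = τ := by
    refine Subset.antisymm (by intro x h; obtain ⟨i, -, rfl⟩ := mem_image.1 h; exact hmτ i) ?_
    intro x hx
    rw [← himg] at hx
    obtain ⟨i, hi, rfl⟩ := mem_image.1 hx
    by_cases h : i = b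
    · exact mem_image.2 ⟨a, mem_erase.2 ⟨hab, ha⟩, by rw [h, hmab]⟩
    · exact mem_image.2 ⟨i, mem_erase.2 ⟨h, hi⟩, rfl⟩
  have honly : ∀ e ∈ D, τ ⊆ (D.erase e).image m → e = a ∨ e = b := by
    intro e he hs
    by_contra! hne
    have hc : #(D.erase e) ≤ #((D.erase e).image m) := by
      rw [card_erase_of_mem he]
      exact le_trans (by omega) (card_le_card hs)
    have hinj : Set.InjOn m (D.erase e) := by
      rw [← card_image_iff]; exact le_antisymm card_image_le hc
    exact hab (hinj (mem_erase.2 ⟨hne.1.symm, ha⟩) (mem_erase.2 ⟨hne.2.symm, hb⟩) hmab)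
  obtain ⟨R, hR, hRf, hR1, hR2⟩ := exists_unique_side hr hdom hcard m hm ha hsa
  obtain ⟨R', hR', hRf', hR1', hR2'⟩ := exists_unique_side hr hdom hcard m hm hb hsb
  refine ⟨R, R', ?_, fun Q => ⟨?_, ?_⟩⟩
  · rintro rfl
    rcases hRf with rfl | ⟨x, hx, rfl, hxa⟩ <;> rcases hRf' with h | ⟨y, hy, h, hyb⟩
    · have h2 := (Prod.ext_iff.1 h).2
      have : a ∈ D.erase b := mem_erase.2 ⟨hab, ha⟩
      simp only at h2
      rw [← h2] at this
      exact notMem_erase _ _ this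
    · have h2 := (Prod.ext_iff.1 h).2
      simp only at h2
      exact notMem_erase a D (h2.symm ▸ ha)
    · have h2 := (Prod.ext_iff.1 h).2
      simp only at h2
      exact notMem_erase b D (h2 ▸ hb)
    · have h1 := (Prod.ext_iff.1 h).1
      simp only at h1
      have hxy : x = y := by
        have : x ∈ insert y τ := h1 ▸ mem_insert_self x τ
        exact (mem_insert.1 this).resolve_right hx
      subst hxy
      obtain ⟨i, hi, h⟩ := hdom x
      have h3 := h _ (hmτ i)
      by_cases hia : i = a
      · exact absurd (hyb i (mem_erase.2 ⟨by rw [hia]; exact hab, hi⟩)) (not_lt.2 h3)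
      · exact absurd (hxa i (mem_erase.2 ⟨hia, hi⟩)) (not_lt.2 h3)
  · rintro ⟨hQ, hinc⟩
    obtain ⟨σ, C⟩ := Q
    rcases incident_cases hinc with ⟨rfl, x, hx, rfl⟩ | ⟨rfl, j, hj, rfl⟩
    · obtain ⟨e, he, hxe⟩ := hQ.1 x
      have hxe' : ∀ z ∈ τ, r e x ≤ r e z := fun z hz => hxe z (mem_insert_of_mem hz)
      have : τ ⊆ (C.erase e).image m := by
        intro z hz
        obtain ⟨i, hi, h⟩ := hQ.1 z
        refine mem_image.2 ⟨i, mem_erase.2 ⟨?_, hi⟩,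
          hmin i z hz fun w hw => h w (mem_insert_of_mem hw)⟩
        rintro rfl
        have := hr _ (le_antisymm (h x (mem_insert_self _ _)) (hxe' z hz))
        exact hx (this ▸ hz)
      rcases honly e he this with rfl | rfl
      · exact Or.inl (hR2 x hx hQ hxe')
      · exact Or.inr (hR2' x hx hQ hxe')
    · have : σ ⊆ (D.erase j).image m := by
        intro z hz
        obtain ⟨i, hi, h⟩ := hQ.1 z
        exact mem_image.2 ⟨i, hi, hmin i z hz h⟩
      rcases honly j hj this with rfl | rfl
      · exact Or.inl (hR1 hQ)
      · exact Or.inr (hR1' hQ)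
  · rintro (rfl | rfl)
    · refine ⟨hR, ?_⟩
      rcases hRf with rfl | ⟨x, hx, rfl, -⟩
      · exact incident_erase ha
      · exact incident_insert hx
    · refine ⟨hR', ?_⟩
      rcases hRf' with rfl | ⟨x, hx, rfl, -⟩
      · exact incident_erase hb
      · exact incident_insert hx

/-- The outer door `(∅, {i₀})` belongs to exactly one room, given by the `r i₀`-largest point. -/
lemma outer_door_one_room [Fintype T] [Nonempty T] (hr : ∀ i, Function.Injective (r i)) (i₀ : I) :
    ∃ R : Finset T × Finset I, ∀ Q, (IsRoom r Q ∧ Incident Q (∅, {i₀})) ↔ Q = R := by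
  obtain ⟨y, -, hy⟩ := (univ : Finset T).exists_max_image (r i₀) univ_nonempty
  refine ⟨(insert y ∅, {i₀}), fun Q => ⟨?_, ?_⟩⟩
  · rintro ⟨hQ, hinc⟩
    obtain ⟨σ, C⟩ := Q
    rcases incident_cases hinc with ⟨rfl, x, hx, rfl⟩ | ⟨rfl, j, hj, rfl⟩
    · obtain ⟨i, hi, h⟩ := hQ.1 y
      obtain rfl := mem_singleton.1 hi
      have : x = y := hr i (le_antisymm (hy x (mem_univ _)) (h x (mem_insert_self _ _)))
      rw [this]
    · obtain ⟨i, hi, h⟩ := hQ.1 y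
      simp_all
  · rintro rfl
    exact ⟨⟨fun z => ⟨i₀, by simp, fun x hx => by
      obtain rfl : x = y := by simpa using hx
      exact hy z (mem_univ _)⟩, by simp⟩, incident_insert (by simp)⟩

/-- A room whose colours are not exactly its indices has zero or two doors of colour `i₀`. -/
lemma room_even_doors (c : T → I) (i₀ : I) {R : Finset T × Finset I}
    (hR : IsRoom r R) (hfull : R.1.image c ≠ R.2) :
    (∀ D, ¬ (IsDoor r c i₀ D ∧ Incident R D)) ∨
      ∃ D D' : Finset T × Finset I, D ≠ D' ∧
        ∀ E, (IsDoor r c i₀ E ∧ Incident R E) ↔ E = D ∨ E = D' := by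
  obtain ⟨σ, C⟩ := R
  obtain ⟨hdom, hcard⟩ := hR
  simp only at hdom hcard hfull
  -- shrinking `σ` or enlarging `C` preserves dominance, so only the colours matter
  have hmono : ∀ {τ : Finset T} {D : Finset I}, τ ⊆ σ → C ⊆ D → Dominant r τ D := by
    intro τ D h1 h2 y
    obtain ⟨i, hi, h⟩ := hdom y
    exact ⟨i, h2 hi, fun x hx => h x (h1 hx)⟩
  -- the doors obtained by deleting a point
  have hdel : ∀ x ∈ σ, i₀ ∈ C → (σ.erase x).image c = C.erase i₀ →
      IsDoor r c i₀ (σ.erase x, C) ∧ Incident (σ, C) (σ.erase x, C) := by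
    intro x hx h0 hc
    refine ⟨⟨hmono (erase_subset _ _) Subset.rfl, ?_, h0, hc⟩, ?_⟩
    · have := card_pos.2 ⟨x, hx⟩
      simp only [card_erase_of_mem hx]; omega
    · have := incident_insert (D := C) (notMem_erase x σ)
      rwa [insert_erase hx] at this
  have hcases : ∀ E, IsDoor r c i₀ E ∧ Incident (σ, C) E →
      i₀ ∈ C ∧ ((∃ x ∈ σ, (σ.erase x).image c = C.erase i₀ ∧ E = (σ.erase x, C)) ∨
        ∃ j, j ∉ C ∧ σ.image c = (insert j C).erase i₀ ∧ E = (σ, insert j C)) := by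
    rintro ⟨τ, D⟩ ⟨⟨-, -, h0, hc⟩, hinc⟩
    rcases incident_cases hinc with ⟨rfl, x, hx, rfl⟩ | ⟨rfl, j, hj, rfl⟩
    · refine ⟨h0, Or.inl ⟨x, mem_insert_self _ _, ?_⟩⟩
      simp only [erase_insert hx]
      exact ⟨hc, trivial⟩
    · simp only at h0 hc hfull
      have hj0 : i₀ ≠ j := by rintro rfl; exact hfull hc
      refine ⟨mem_erase.2 ⟨hj0, h0⟩, Or.inr ⟨j, notMem_erase _ _, ?_⟩⟩
      rw [insert_erase hj]
      exact ⟨hc, rfl⟩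
  by_cases h0 : i₀ ∈ C
  swap
  · exact Or.inl fun E hE => h0 (hcases E hE).1
  have hC1 : 0 < #C := card_pos.2 ⟨_, h0⟩
  by_cases hA : σ.image c = C.erase i₀
  · right
    have hlt : #(C.erase i₀) < #σ := by rw [card_erase_of_mem h0]; omega
    obtain ⟨a, ha, b, hb, hab, hcab⟩ := exists_ne_map_eq_of_card_lt_of_maps_to hlt
      (fun x hx => by
        show c x ∈ (↑(C.erase i₀) : Set I)
        rw [mem_coe, ← hA]; exact mem_image_of_mem c hx)
    have hrem : ∀ a b, a ∈ σ → b ∈ σ → a ≠ b → c a = c b →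
        (σ.erase a).image c = C.erase i₀ := by
      intro a b ha hb hab hcab
      rw [← hA]
      refine Subset.antisymm (image_subset_image (erase_subset _ _)) fun i hi => ?_
      obtain ⟨x, hx, rfl⟩ := mem_image.1 hi
      by_cases h : x = a
      · exact mem_image.2 ⟨b, mem_erase.2 ⟨hab.symm, hb⟩, by rw [h, hcab]⟩
      · exact mem_image_of_mem c (mem_erase.2 ⟨h, hx⟩)
    refine ⟨(σ.erase a, C), (σ.erase b, C), ?_, fun E => ⟨fun hE => ?_, ?_⟩⟩
    · intro h
      have h1 := (Prod.ext_iff.1 h).1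
      simp only at h1
      exact notMem_erase a σ (h1 ▸ mem_erase.2 ⟨hab, ha⟩)
    · rcases (hcases E hE).2 with ⟨x, hx, hxc, rfl⟩ | ⟨j, hj, hjc, rfl⟩
      · by_contra! hne
        have hxa : a ≠ x := by rintro rfl; exact hne.1 rfl
        have hxb : b ≠ x := by rintro rfl; exact hne.2 rfl
        have hinj : Set.InjOn c (σ.erase x) := by
          rw [← card_image_iff, hxc, card_erase_of_mem h0, card_erase_of_mem hx, hcard]
        exact hab (hinj (mem_erase.2 ⟨hxa, ha⟩) (mem_erase.2 ⟨hxb, hb⟩) hcab)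
      · exfalso
        have hj0 : j ≠ i₀ := by rintro rfl; exact hj h0
        have : j ∈ C.erase i₀ := by
          rw [← hA, hjc]; exact mem_erase.2 ⟨hj0, mem_insert_self _ _⟩
        exact hj (mem_of_mem_erase this)
    · rintro (rfl | rfl)
      · exact hdel a ha h0 (hrem a b ha hb hab hcab)
      · exact hdel b hb h0 (hrem b a hb ha hab.symm hcab.symm)
  by_cases hB : ∃ j, j ∉ C ∧ σ.image c = (insert j C).erase i₀
  · right
    obtain ⟨j, hj, hjc⟩ := hB
    have hj0 : j ≠ i₀ := by rintro rfl; exact hj h0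
    have hinj : Set.InjOn c σ := by
      rw [← card_image_iff, hjc, card_erase_of_mem (mem_insert_of_mem h0),
        card_insert_of_notMem hj, hcard]
      simp
    obtain ⟨x, hx, rfl⟩ : ∃ x ∈ σ, c x = j := mem_image.1 (by
      rw [hjc]; exact mem_erase.2 ⟨hj0, mem_insert_self _ _⟩)
    have hxc : (σ.erase x).image c = C.erase i₀ := by
      ext i
      constructor
      · intro h
        obtain ⟨z, hz, rfl⟩ := mem_image.1 h
        have hz' := mem_erase.1 hz
        have h1 : c z ∈ (insert (c x) C).erase i₀ := hjc ▸ mem_image_of_mem c hz'.2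
        have h2 : c z ≠ c x := fun h => hz'.1 (hinj hz'.2 hx h)
        simp only [mem_erase, mem_insert] at h1 ⊢
        exact ⟨h1.1, h1.2.resolve_left h2⟩
      · intro h
        have h' := mem_erase.1 h
        have h1 : i ∈ σ.image c := by
          rw [hjc]; exact mem_erase.2 ⟨h'.1, mem_insert_of_mem h'.2⟩
        obtain ⟨z, hz, rfl⟩ := mem_image.1 h1
        refine mem_image_of_mem c (mem_erase.2 ⟨?_, hz⟩)
        rintro rfl
        exact hj h'.2
    refine ⟨(σ.erase x, C), (σ, insert (c x) C), ?_, fun E => ⟨fun hE => ?_, ?_⟩⟩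
    · intro h
      have h1 := (Prod.ext_iff.1 h).1
      simp only at h1
      exact notMem_erase x σ (h1.symm ▸ hx)
    · rcases (hcases E hE).2 with ⟨z, hz, hzc, rfl⟩ | ⟨k, hk, hkc, rfl⟩
      · left
        suffices z = x by rw [this]
        by_contra hne
        have : c x ∈ C.erase i₀ := hzc ▸ mem_image_of_mem c (mem_erase.2 ⟨Ne.symm hne, hx⟩)
        exact hj (mem_of_mem_erase this)
      · right
        suffices k = c x by rw [this]
        have hk0 : k ≠ i₀ := by rintro rfl; exact hk h0
        have : k ∈ (insert (c x) C).erase i₀ := by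
          rw [← hjc, hkc]; exact mem_erase.2 ⟨hk0, mem_insert_self _ _⟩
        exact (mem_insert.1 (mem_of_mem_erase this)).resolve_right hk
    · rintro (rfl | rfl)
      · exact hdel x hx h0 hxc
      · refine ⟨⟨hmono Subset.rfl (subset_insert _ _), ?_, mem_insert_of_mem h0, hjc⟩, ?_⟩
        · simp [card_insert_of_notMem hj, hcard]
        · exact Or.inr ⟨rfl, c x, hj, fun _ => mem_insert⟩
  · left
    intro E hE
    rcases (hcases E hE).2 with ⟨x, hx, hxc, rfl⟩ | ⟨k, hk, hkc, rfl⟩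
    · have hsplit : σ.image c = insert (c x) (C.erase i₀) := by
        rw [← hxc, ← image_insert, insert_erase hx]
      by_cases hcx : c x ∈ C
      · by_cases hcx0 : c x = i₀
        · exact hfull (by rw [hsplit, hcx0, insert_erase h0])
        · exact hA (by rw [hsplit, insert_eq_of_mem (mem_erase.2 ⟨hcx0, hcx⟩)])
      · refine hB ⟨c x, hcx, ?_⟩
        rw [hsplit, erase_insert_of_ne]
        rintro h
        exact hcx (h ▸ h0)
    · exact hB ⟨k, hk, hkc⟩

/-- Scarf's lemma: some room carries exactly the colours in its index set. -/
lemma exists_full_room [Fintype T] [Nonempty T] [Fintype I] (hr : ∀ i, Function.Injective (r i))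
    (c : T → I) :
    ∃ (σ : Finset T) (C : Finset I), σ.Nonempty ∧ Dominant r σ C ∧ σ.image c = C := by
  classical
  by_contra hno
  obtain ⟨t₀⟩ := ‹Nonempty T›
  have : Nonempty T := ⟨t₀⟩
  let i₀ := c t₀
  have hfull : ∀ R : Finset T × Finset I, IsRoom r R → R.1.image c ≠ R.2 := by
    intro R hR h
    refine hno ⟨R.1, R.2, ?_, hR.1, h⟩
    obtain ⟨i, hi, -⟩ := hR.1 t₀
    rw [← card_pos, hR.2]
    exact card_pos.2 ⟨i, hi⟩
  let rooms : Finset (Finset T × Finset I) := univ.filter (IsRoom r)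
  let doors : Finset (Finset T × Finset I) := univ.filter (IsDoor r c i₀)
  have hcount := sum_card_bipartiteAbove_eq_sum_card_bipartiteBelow (s := rooms) (t := doors)
    (Incident (T := T) (I := I))
  have heven : Even (∑ R ∈ rooms, #(doors.bipartiteAbove Incident R)) := by
    refine even_sum _ fun R hR => ?_
    have hR' : IsRoom r R := by simpa [rooms] using hR
    rcases room_even_doors c i₀ hR' (hfull R hR') with h | ⟨D, D', hne, h⟩
    · have : doors.bipartiteAbove Incident R = ∅ := by
        ext E; simpa [doors, bipartiteAbove] using h E
      simp [this]
    · have : doors.bipartiteAbove Incident R = {D, D'} := by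
        ext E; simpa [doors, bipartiteAbove] using h E
      rw [this, card_pair hne]
      exact even_two
  have houter : ((∅ : Finset T), ({i₀} : Finset I)) ∈ doors := by
    simp [doors, IsDoor, Dominant]
  have hodd : Odd (∑ D ∈ doors, #(rooms.bipartiteBelow Incident D)) := by
    rw [← add_sum_erase _ _ houter]
    refine Odd.add_even ?_ (even_sum _ fun D hD => ?_)
    · obtain ⟨R, h⟩ := outer_door_one_room hr i₀
      have : rooms.bipartiteBelow Incident ((∅ : Finset T), ({i₀} : Finset I)) = {R} := by
        ext E; simpa [rooms, bipartiteBelow] using h E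
      rw [this]; simp
    · obtain ⟨hne, hD⟩ := mem_erase.1 hD
      have hD' : IsDoor r c i₀ D := by simpa [doors] using hD
      obtain ⟨τ, D⟩ := D
      have hτ : τ.Nonempty := by
        rw [nonempty_iff_ne_empty]
        rintro rfl
        obtain ⟨-, h1, h2, -⟩ := hD'
        refine hne ?_
        obtain ⟨k, rfl⟩ := card_eq_one.1 (by simpa using h1)
        rw [mem_singleton.1 h2]
      obtain ⟨R, R', hRR, h⟩ := door_two_rooms hr hD'.1 hD'.2.1 hτ
      have : rooms.bipartiteBelow Incident (τ, D) = {R, R'} := by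
        ext E; simpa [rooms, bipartiteBelow] using h E
      rw [this, card_pair hRR]
      exact even_two
  rw [hcount] at heven
  exact Nat.not_even_iff_odd.2 hodd heven

end rooms

/-! ### The fixed point theorems of Brouwer and Schauder -/

/-- Scarf's lemma on the grid of integer points of the simplex dilated by `N`: every colouring has
a cluster of grid points, of diameter at most the number of coordinates, in which every colour `i`
occurs unless the `i`-th coordinate is small throughout. -/
lemma exists_grid_cluster {I : Type*} [Fintype I] [DecidableEq I] [Nonempty I] (N : ℕ)
    (c : (I → ℕ) → I) :
    ∃ σ : Finset (I → ℕ), σ.Nonempty ∧ (∀ x ∈ σ, ∑ i, x i = N) ∧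
      (∀ i, (∃ x ∈ σ, c x = i) ∨ ∀ x ∈ σ, x i ≤ Fintype.card I) ∧
      ∀ x ∈ σ, ∀ y ∈ σ, ∀ i, x i ≤ y i + Fintype.card I := by
  classical
  let G := {y : I → ℕ // y ∈ piAntidiag (univ : Finset I) N}
  have hG : ∀ y : G, ∑ i, y.1 i = N := fun y => (mem_piAntidiag.1 y.2).1
  have : Nonempty G := ⟨⟨Pi.single (Classical.arbitrary I) N, by simp⟩⟩
  -- rank by the `i`-th coordinate, breaking ties with an enumeration of the grid
  let e := Fintype.equivFin G
  let M := Fintype.card G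
  let r : I → G → ℕ := fun i y => y.1 i * M + e y
  have hrlt : ∀ i (x y : G), x.1 i < y.1 i → r i x < r i y := by
    intro i x y h
    have h1 : (e x : ℕ) < M := (e x).2
    have h2 : (x.1 i + 1) * M ≤ y.1 i * M := Nat.mul_le_mul_right _ h
    simp only [r]
    nlinarith
  have hr : ∀ i, Function.Injective (r i) := by
    intro i x y h
    rcases lt_trichotomy (x.1 i) (y.1 i) with h1 | h1 | h1
    · exact absurd h (hrlt i x y h1).ne
    · simp only [r, h1, add_right_inj] at h
      exact e.injective (Fin.ext h)
    · exact absurd h (hrlt i y x h1).ne'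
  obtain ⟨σ, C, hσ, hdom, hC⟩ := exists_full_room hr (fun y : G => c y.1)
  choose m hmσ hm using fun i => σ.exists_min_image (fun y : G => y.1 i) hσ
  have hCne : C.Nonempty := by rw [← hC]; exact hσ.image _
  have hlarge : N < ∑ i ∈ C, ((m i).1 i + 1) := by
    by_contra! hle
    obtain ⟨k, hk⟩ := hCne
    let d := N - ∑ i ∈ C, ((m i).1 i + 1)
    -- a grid point beating all the minima, the excess `d` being put on coordinate `k`
    let y : I → ℕ := fun i => (if i ∈ C then (m i).1 i + 1 else 0) + (if i = k then d else 0)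
    have hy : y ∈ piAntidiag (univ : Finset I) N := by
      simp only [mem_piAntidiag, y, sum_add_distrib, mem_univ, implies_true, and_true]
      rw [sum_ite_eq' univ k, if_pos (mem_univ k), ← sum_filter]
      simp only [filter_mem_eq_inter, univ_inter, d]
      rw [Nat.add_sub_cancel' hle]
    obtain ⟨i, hi, h⟩ := hdom ⟨y, hy⟩
    refine absurd (h (m i) (hmσ i)) (not_le.2 (hrlt _ _ _ ?_))
    simp only [y, if_pos hi]
    omega
  -- total excess of a point of the cluster over the minima
  have hexc : ∀ x ∈ σ, ∑ i ∈ C, (x.1 i - (m i).1 i) + ∑ i ∈ Cᶜ, x.1 i ≤ Fintype.card I := by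
    intro x hx
    have h1 : ∑ i ∈ C, x.1 i + ∑ i ∈ Cᶜ, x.1 i = N := by rw [sum_add_sum_compl]; exact hG x
    have h2 : ∑ i ∈ C, (x.1 i - (m i).1 i) + ∑ i ∈ C, (m i).1 i = ∑ i ∈ C, x.1 i := by
      rw [← sum_add_distrib]
      exact sum_congr rfl fun i _ => Nat.sub_add_cancel (hm i x hx)
    have h3 : ∑ i ∈ C, ((m i).1 i + 1) = ∑ i ∈ C, (m i).1 i + #C := by
      simp [sum_add_distrib]
    have h4 : #C ≤ Fintype.card I := card_le_univ C
    omega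
  have hin : ∀ x ∈ σ, ∀ i ∈ C, x.1 i ≤ (m i).1 i + Fintype.card I := by
    intro x hx i hi
    have h1 := hexc x hx
    have h2 : x.1 i - (m i).1 i ≤ ∑ i ∈ C, (x.1 i - (m i).1 i) :=
      single_le_sum (f := fun i => x.1 i - (m i).1 i) (fun _ _ => Nat.zero_le _) hi
    omega
  have hout : ∀ x ∈ σ, ∀ i ∉ C, x.1 i ≤ Fintype.card I := by
    intro x hx i hi
    have h1 := hexc x hx
    have h2 : x.1 i ≤ ∑ i ∈ Cᶜ, x.1 i :=
      single_le_sum (f := fun i => x.1 i) (fun _ _ => Nat.zero_le _) (mem_compl.2 hi)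
    omega
  refine ⟨σ.image Subtype.val, hσ.image _, ?_, ?_, ?_⟩
  · simp only [forall_mem_image]
    exact fun x _ => hG x
  · intro i
    by_cases hi : i ∈ C
    · left
      rw [← hC] at hi
      obtain ⟨x, hx, rfl⟩ := mem_image.1 hi
      exact ⟨x.1, mem_image_of_mem _ hx, rfl⟩
    · right
      simp only [forall_mem_image]
      exact fun x hx => hout x hx i hi
  · simp only [forall_mem_image]
    intro x hx y hy i
    by_cases hi : i ∈ C
    · have := hin x hx i hi
      have := hm i y hy
      omega
    · have := hout x hx i hi
      omega

/-- On a compact set, approximate fixed points of every precision yield a fixed point. -/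
lemma exists_fixed_of_approx {E : Type*} [MetricSpace E] {K : Set E} (hK : IsCompact K)
    {f : E → E} (hf : ContinuousOn f K) (h : ∀ ε > 0, ∃ x ∈ K, dist (f x) x ≤ ε) :
    ∃ x ∈ K, f x = x := by
  obtain ⟨x₁, hx₁, -⟩ := h 1 one_pos
  obtain ⟨x, hx, hmin⟩ := hK.exists_isMinOn ⟨x₁, hx₁⟩ (continuous_dist.comp_continuousOn (hf.prodMk continuousOn_id))
  refine ⟨x, hx, dist_le_zero.1 (le_of_forall_pos_le_add fun ε hε => ?_)⟩
  obtain ⟨y, hy, hyε⟩ := h ε hε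
  have : dist (f x) x ≤ dist (f y) y := hmin hy
  linarith

/-- Brouwer's fixed point theorem for the standard simplex. -/
lemma brouwer_stdSimplex {I : Type*} [Fintype I] [Nonempty I] {f : (I → ℝ) → I → ℝ}
    (hf : ContinuousOn f (stdSimplex ℝ I)) (hmap : Set.MapsTo f (stdSimplex ℝ I) (stdSimplex ℝ I)) :
    ∃ p ∈ stdSimplex ℝ I, f p = p := by
  classical
  have hcpt : IsCompact (stdSimplex ℝ I) := isCompact_stdSimplex ℝ I
  refine exists_fixed_of_approx hcpt hf fun ε hε => ?_
  set n : ℕ := Fintype.card I with hn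
  have hn0 : (0 : ℝ) < n := by exact_mod_cast Fintype.card_pos
  -- it suffices that no coordinate drops by more than `η`, since both sums are `1`
  set η : ℝ := ε / n with hη
  have hη0 : 0 < η := div_pos hε hn0
  suffices ∃ p ∈ stdSimplex ℝ I, ∀ i, p i - η ≤ f p i by
    obtain ⟨p, hp, h⟩ := this
    refine ⟨p, hp, (dist_pi_le_iff hε.le).2 fun i => ?_⟩
    have hsum : ∑ j, (f p j - p j + η) = n * η := by
      rw [sum_add_distrib, sum_sub_distrib, (hmap hp).2, hp.2]
      simp [hn]
    have h1 : f p i - p i + η ≤ ∑ j, (f p j - p j + η) :=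
      single_le_sum (f := fun j => f p j - p j + η) (fun j _ => by have := h j; linarith) (mem_univ i)
    have h2 : (n : ℝ) * η = ε := by rw [hη]; field_simp
    have h3 : η ≤ ε := by
      rw [← h2]
      have : (1 : ℝ) ≤ n := by exact_mod_cast Fintype.card_pos
      nlinarith
    rw [Real.dist_eq, abs_le]
    constructor
    · have := h i; linarith
    · linarith
  have huc := hcpt.uniformContinuousOn_of_continuous hf
  obtain ⟨δ, hδ, hfδ⟩ := Metric.uniformContinuousOn_iff.1 huc (η / 2) (by positivity)
  obtain ⟨N, hN⟩ := exists_nat_gt (n / min δ (η / 2))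
  have hmin : 0 < min δ (η / 2) := lt_min hδ (by positivity)
  have hN0 : (0 : ℝ) < N := lt_trans (by positivity) hN
  have hnN : n / (N : ℝ) < min δ (η / 2) := by
    rw [div_lt_iff₀ hmin] at hN
    rw [div_lt_iff₀ hN0]; linarith
  have hnδ : n / (N : ℝ) < δ := hnN.trans_le (min_le_left _ _)
  have hnη : n / (N : ℝ) < η / 2 := hnN.trans_le (min_le_right _ _)
  let pt : (I → ℕ) → I → ℝ := fun x i => x i / N
  have hpt : ∀ x : I → ℕ, ∑ i, x i = N → pt x ∈ stdSimplex ℝ I := by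
    intro x hx
    refine ⟨fun i => by simp only [pt]; positivity, ?_⟩
    simp only [pt]
    rw [← sum_div, ← Nat.cast_sum, hx, div_self hN0.ne']
  -- colour a grid point by a coordinate that `f` does not decrease
  have hcol : ∀ x : I → ℕ, ∃ i, ∑ i, x i = N → pt x i ≤ f (pt x) i := by
    intro x
    by_cases hx : ∑ i, x i = N
    · have : ∑ i, pt x i ≤ ∑ i, f (pt x) i := by
        rw [(hpt x hx).2, (hmap (hpt x hx)).2]
      obtain ⟨i, -, hi⟩ := exists_le_of_sum_le univ_nonempty this
      exact ⟨i, fun _ => hi⟩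
    · exact ⟨Classical.arbitrary I, fun h => absurd h hx⟩
  choose c hc using hcol
  obtain ⟨σ, ⟨x, hx⟩, hσN, hσc, hσd⟩ := exists_grid_cluster N c
  have hdiff : ∀ y ∈ σ, ∀ z ∈ σ, ∀ i, pt y i - pt z i ≤ n / N := by
    intro y hy z hz i
    have : (y i : ℝ) ≤ z i + n := by exact_mod_cast hσd y hy z hz i
    simp only [pt]
    rw [← sub_div]
    gcongr
    linarith
  have hdist : ∀ y ∈ σ, dist (pt x) (pt y) < δ := by
    intro y hy
    refine lt_of_le_of_lt ((dist_pi_le_iff (by positivity)).2 fun i => ?_) hnδ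
    rw [Real.dist_eq, abs_le]
    have h1 := hdiff x hx y hy i
    have h2 := hdiff y hy x hx i
    constructor <;> linarith
  refine ⟨pt x, hpt x (hσN x hx), fun i => ?_⟩
  rcases hσc i with ⟨y, hy, rfl⟩ | hi
  · have h1 := hc y (hσN y hy)
    have h2 := hdiff x hx y hy (c y)
    have h3 := hfδ _ (hpt x (hσN x hx)) _ (hpt y (hσN y hy)) (hdist y hy)
    have h4 := (dist_le_pi_dist (f (pt x)) (f (pt y)) (c y)).trans_lt h3
    rw [Real.dist_eq, abs_lt] at h4
    linarith [h4.1]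
  · have h1 : (0 : ℝ) ≤ f (pt x) i := (hmap (hpt x (hσN x hx))).1 i
    have h2 : pt x i ≤ n / N := by
      simp only [pt]
      gcongr
      exact_mod_cast hi x hx
    linarith

/-- Schauder's fixed point theorem. Brouwer's theorem is applied on the simplex of weights of a
finite `ε`-net, through the Schauder projection. -/
lemma schauder {Y : Type*} [NormedAddCommGroup Y] [NormedSpace ℝ Y] {X : Set Y}
    (hne : X.Nonempty) (hcpt : IsCompact X) (hconv : Convex ℝ X) {f : Y → Y}
    (hf : ContinuousOn f X) (hmap : Set.MapsTo f X X) : ∃ x ∈ X, f x = x := by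
  refine exists_fixed_of_approx hcpt hf fun ε hε => ?_
  obtain ⟨t, htX, htfin, hcover⟩ := hcpt.finite_cover_balls hε
  have : Fintype t := htfin.fintype
  have : Nonempty t := by
    obtain ⟨x, hx⟩ := hne
    obtain ⟨v, hv, -⟩ := Set.mem_iUnion₂.1 (hcover hx)
    exact ⟨⟨v, hv⟩⟩
  let w : t → Y → ℝ := fun v y => max 0 (ε - dist y v)
  have hw0 : ∀ v y, 0 ≤ w v y := fun v y => le_max_left _ _
  have hwc : ∀ v, Continuous (w v) := fun v => by fun_prop
  have hW : ∀ y ∈ X, 0 < ∑ v, w v y := by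
    intro y hy
    obtain ⟨v, hv, hyv⟩ := Set.mem_iUnion₂.1 (hcover hy)
    refine sum_pos' (fun v _ => hw0 v y) ⟨⟨v, hv⟩, mem_univ _, lt_max_of_lt_right ?_⟩
    exact sub_pos.2 hyv
  let q : Y → t → ℝ := fun y v => w v y / ∑ u, w u y
  have hq : ∀ y ∈ X, q y ∈ stdSimplex ℝ t := fun y hy =>
    ⟨fun v => div_nonneg (hw0 v y) (hW y hy).le, by
      simp only [q]; rw [← sum_div, div_self (hW y hy).ne']⟩
  have hqc : ContinuousOn q X := continuousOn_pi.2 fun v =>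
    (hwc v).continuousOn.div (continuous_finsetSum _ fun u _ => hwc u).continuousOn
      fun y hy => (hW y hy).ne'
  let b : (t → ℝ) → Y := fun p => ∑ v, p v • (v : Y)
  have hb : Set.MapsTo b (stdSimplex ℝ t) X := fun p hp =>
    hconv.sum_mem (fun v _ => hp.1 v) hp.2 fun v _ => htX v.2
  have hbc : Continuous b := by fun_prop
  obtain ⟨p, hp, hfix⟩ := brouwer_stdSimplex (f := fun p => q (f (b p)))
    (hqc.comp (hf.comp hbc.continuousOn hb) (hmap.comp hb))
    (fun p hp => hq _ (hmap (hb hp)))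
  refine ⟨b p, hb hp, ?_⟩
  have hy := hmap (hb hp)
  set y := f (b p) with hydef
  -- only net points within `ε` of `y` carry weight
  have hbq : b p = ∑ v, q y v • (v : Y) := by
    simp only [b]
    exact sum_congr rfl fun v _ => by rw [← congrFun hfix v]
  have hball : ∑ v, q y v • (v : Y) ∈ Metric.closedBall y ε := by
    have hq' := hq y hy
    have : ∑ v, q y v • (v : Y) - y = ∑ v, q y v • ((v : Y) - y) := by
      simp only [smul_sub, sum_sub_distrib, ← sum_smul]
      rw [hq'.2, one_smul]
    rw [Metric.mem_closedBall, dist_eq_norm, this]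
    calc ‖∑ v, q y v • ((v : Y) - y)‖ ≤ ∑ v, q y v * ε := by
          refine norm_sum_le_of_le _ fun v _ => ?_
          rw [norm_smul, Real.norm_of_nonneg (hq'.1 v)]
          by_cases hd : dist y v ≤ ε
          · refine mul_le_mul_of_nonneg_left ?_ (hq'.1 v)
            rwa [← dist_eq_norm, dist_comm]
          · have : q y v = 0 := by
              simp only [q, w]
              rw [max_eq_left (by linarith), zero_div]
            simp [this]
      _ = ε := by rw [← sum_mul, hq'.2, one_mul]
  rw [← hbq] at hball
  rw [dist_comm]
  exact hball

end PeriodicOrbit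

/-! ### The periodic orbit -/

/-- Let `Y` be a real Banach space, `T̄ > 0`, and let `φ` be a process on `Y`
that is `T̄`-periodic in time (here `φ t t₀ x` denotes `φ(t, t₀, x)`).  If `X⁰ ⊆ Y` is a
nonempty, compact and convex set such that `φ T̄ 0 x ∈ X⁰` for every `x ∈ X⁰`, then there
exists a global periodic solution `x : ℝ → Y` with period `T̄`: `x (t + T̄) = x t` for every
`t`, and `φ t t₀ (x t₀) = x t` for every `t₀` and every `t ≥ t₀`. -/
theorem periodic_orbit_of_invariant_compact_convex
    {Y : Type*} [NormedAddCommGroup Y] [NormedSpace ℝ Y] [CompleteSpace Y]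
    (Tbar : ℝ) (hTbar : 0 < Tbar)
    (φ : ℝ → ℝ → Y → Y)
    (hφ_id : ∀ (t₀ : ℝ) (x : Y), φ t₀ t₀ x = x)
    (hφ_comp : ∀ (r s t : ℝ) (x : Y), r ≤ s → s ≤ t → φ t s (φ s r x) = φ t r x)
    (hφ_per : ∀ (t₀ t : ℝ) (x : Y), t₀ ≤ t → φ (t + Tbar) (t₀ + Tbar) x = φ t t₀ x)
    (hφ_cont : ∀ (t₀ t : ℝ), t₀ ≤ t → Continuous (φ t t₀))
    (X : Set Y) (hX_ne : X.Nonempty) (hX_cpt : IsCompact X) (hX_conv : Convex ℝ X)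
    (hX_inv : ∀ x ∈ X, φ Tbar 0 x ∈ X) :
    ∃ x : ℝ → Y, (∀ t : ℝ, x (t + Tbar) = x t) ∧
      ∀ (t₀ t : ℝ), t₀ ≤ t → φ t t₀ (x t₀) = x t := by
  obtain ⟨x₀, -, hx₀⟩ := PeriodicOrbit.schauder hX_ne hX_cpt hX_conv
    (hφ_cont 0 Tbar hTbar.le).continuousOn hX_inv
  -- periodicity of the process over several periods
  have hnat : ∀ (n : ℕ) (s t : ℝ) (x : Y), s ≤ t →
      φ (t + n * Tbar) (s + n * Tbar) x = φ t s x := by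
    intro n s t x hst
    induction n with
    | zero => simp
    | succ n ih =>
      rw [← ih, ← hφ_per _ _ _ (by linarith : s + n * Tbar ≤ t + n * Tbar)]
      push_cast
      congr 1 <;> ring
  have hint : ∀ (k : ℤ) (s t : ℝ) (x : Y), s ≤ t →
      φ (t + k * Tbar) (s + k * Tbar) x = φ t s x := by
    intro k s t x hst
    obtain ⟨n, rfl | rfl⟩ := k.eq_nat_or_neg
    · exact_mod_cast hnat n s t x hst
    · rw [← hnat n _ _ _ (by linarith : s + ((-(n : ℤ) : ℤ) : ℝ) * Tbar ≤ t + _)]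
      push_cast
      congr 1 <;> ring
  have hfix : ∀ n : ℕ, φ (n * Tbar) 0 x₀ = x₀ := by
    intro n
    induction n with
    | zero => simp [hφ_id]
    | succ n ih =>
      have h0 : 0 ≤ n * Tbar := by positivity
      rw [← hφ_comp 0 (n * Tbar) _ x₀ h0 (by push_cast; linarith), ih]
      have := hnat n 0 Tbar x₀ hTbar.le
      rw [hx₀] at this
      rw [← this]
      push_cast
      congr 1 <;> ring
  have hshift : ∀ (n : ℕ) (s : ℝ), 0 ≤ s → φ (s + n * Tbar) 0 x₀ = φ s 0 x₀ := by
    intro n s hs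
    rw [← hφ_comp 0 (n * Tbar) _ x₀ (by positivity) (by linarith), hfix]
    simpa using hnat n 0 s x₀ hs
  have hfl : ∀ t : ℝ, 0 ≤ t - ⌊t / Tbar⌋ * Tbar := fun t => by
    have := (le_div_iff₀ hTbar).1 (Int.floor_le (t / Tbar))
    linarith
  refine ⟨fun t => φ (t - ⌊t / Tbar⌋ * Tbar) 0 x₀, fun t => ?_, fun t₀ t ht => ?_⟩
  · have : ⌊(t + Tbar) / Tbar⌋ = ⌊t / Tbar⌋ + 1 := by
      rw [add_div, div_self hTbar.ne', Int.floor_add_one]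
    simp only [this]
    push_cast
    congr 1
    ring
  · set k := ⌊t₀ / Tbar⌋ with hk
    have hkl : k ≤ ⌊t / Tbar⌋ := Int.floor_le_floor (by gcongr)
    obtain ⟨n, hn⟩ := Int.le.dest hkl
    have h1 := hint k (t₀ - k * Tbar) (t - k * Tbar) (φ (t₀ - k * Tbar) 0 x₀) (by linarith)
    rw [sub_add_cancel, sub_add_cancel] at h1
    simp only
    rw [h1, hφ_comp _ _ _ _ (hfl t₀) (by linarith), ← hshift n _ (hfl t), ← hn]
    push_cast
    congr 1
    ring
end

section
/- Let Y be a real Banach space, T̄ > 0, and let φ be a process on Y that is T̄-periodic in time. Let x : ℝ → Y satisfy x(t + T̄) = x(t) for all t ∈ ℝ and φ(t, t₀, x(t₀)) = x(t) for all t₀ ∈ ℝ and t ≥ t₀. Assume: (H1) there exist C₁ ≥ 1 and λ₁ > 0 such that for every t₀ ∈ ℝ, every h ∈ Y with ‖h‖ ≤ λ₁ and every t ∈ [t₀, t₀ + T̄], ‖φ(t, t₀, x(t₀) + h) − x(t)‖ ≤ min{C₁‖h‖, 1}; (H2) there exist a bounded linear operator V : Y → Y with operator norm ‖V‖ = a <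 1, and constants C₃ > 0, λ₃ > 0, such that ‖φ(T̄, 0, x(0) + h) − x(T̄) − V h‖ ≤ C₃‖h‖² whenever ‖h‖ ≤ λ₃. Then for every ε > 0 with a + ε < 1 there exist δ > 0 and D > 0 such that for every t₀ ∈ ℝ, every t ≥ t₀ and every h ∈ Y with ‖h‖ ≤ δ, one has ‖φ(t, t₀, x(t₀) + h) − x(t)‖ ≤ D e^{ln(a+ε)(t−t₀)/T̄} ‖h‖. -/
/-!
Write `b = a + ε`. By (H2), the period map based at time `0` contracts distances to the orbit by
the factor `b` on the ball of radius `min lam₃ (ε / C₃)`, because there `C₃‖h‖² ≤ ε‖h‖`; by periodicity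
the same holds for the period map based at any `k T̄`, and iterating it gives the factor `b ^ n` after
`n` periods. A general time interval `[t₀, t]` splits into an initial piece up to the first
multiple of `T̄`, a whole number `n` of periods, and a final piece. The two end pieces are shorter
than `T̄`, so (H1) bounds each by a factor `C₁`, and `t - t₀ ≤ (n + 2) T̄` gives
`b ^ n ≤ b⁻² exp (log b (t - t₀) / T̄)`. Hence `D = C₁² / b²` works.
-/

/-- Comparison of the discrete decay rate `b ^ n` with the continuous one, when at most two
further periods separate `n T` from the elapsed time `u`. -/
lemma pow_le_div_sq_mul_exp {b T u : ℝ} (hb : 0 < b) (hb1 : b < 1) (hT : 0 < T) (n : ℕ)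
    (hu : u ≤ (n + 2) * T) :
    b ^ n ≤ 1 / b ^ 2 * Real.exp (Real.log b * u / T) := by
  have h1 : b ^ (n + 2) ≤ Real.exp (Real.log b * u / T) := by
    rw [← Real.rpow_natCast, Real.rpow_def_of_pos hb, Real.exp_le_exp, mul_div_assoc]
    refine mul_le_mul_of_nonpos_left ?_ (Real.log_neg hb hb1).le
    rw [div_le_iff₀ hT]
    push_cast
    exact hu
  have hb2 : 0 < b ^ 2 := by positivity
  rw [one_div, inv_mul_eq_div, le_div_iff₀ hb2, ← pow_add]
  exact h1

/-- Let `Y` be a real Banach space, `T̄ > 0`, and `φ` a process on `Y` that is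
`T̄`-periodic in time.  Let `x : ℝ → Y` be a `T̄`-periodic solution of the process.  Assume:
(H1) there exist `C₁ ≥ 1` and `lam₁ > 0` such that for every `t₀`, every `h` with `‖h‖ ≤ lam₁`
and every `t ∈ [t₀, t₀ + T̄]`, `‖φ t t₀ (x t₀ + h) − x t‖ ≤ min (C₁‖h‖) 1`;
(H2) there exist a bounded linear operator `V : Y → Y` with `‖V‖ = a < 1` and constants
`C₃, lam₃ > 0` such that `‖φ T̄ 0 (x 0 + h) − x T̄ − V h‖ ≤ C₃‖h‖²` for `‖h‖ ≤ lam₃`.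
Then for every `ε > 0` with `a + ε < 1` there exist `δ > 0` and `D > 0` such that for all
`t₀`, all `t ≥ t₀` and all `h` with `‖h‖ ≤ δ`,
`‖φ t t₀ (x t₀ + h) − x t‖ ≤ D · exp(log(a+ε)(t−t₀)/T̄) · ‖h‖`. -/
theorem periodic_orbit_locally_attracting
    {Y : Type*} [NormedAddCommGroup Y] [NormedSpace ℝ Y] [CompleteSpace Y]
    (Tbar : ℝ) (hTbar : 0 < Tbar)
    (φ : ℝ → ℝ → Y → Y)
    (hφ_id : ∀ (t₀ : ℝ) (y : Y), φ t₀ t₀ y = y)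
    (hφ_comp : ∀ (r s t : ℝ) (y : Y), r ≤ s → s ≤ t → φ t s (φ s r y) = φ t r y)
    (hφ_per : ∀ (t₀ t : ℝ) (y : Y), t₀ ≤ t → φ (t + Tbar) (t₀ + Tbar) y = φ t t₀ y)
    (hφ_cont : ∀ (t₀ t : ℝ), t₀ ≤ t → Continuous (φ t t₀))
    (x : ℝ → Y)
    (hx_per : ∀ t : ℝ, x (t + Tbar) = x t)
    (hx_sol : ∀ (t₀ t : ℝ), t₀ ≤ t → φ t t₀ (x t₀) = x t)
    -- (H1)
    (C₁ lam₁ : ℝ) (hC₁ : 1 ≤ C₁) (hlam₁ : 0 < lam₁)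
    (hH1 : ∀ (t₀ : ℝ) (h : Y), ‖h‖ ≤ lam₁ → ∀ t : ℝ, t₀ ≤ t → t ≤ t₀ + Tbar →
      ‖φ t t₀ (x t₀ + h) - x t‖ ≤ min (C₁ * ‖h‖) 1)
    -- (H2)
    (V : Y →L[ℝ] Y) (a : ℝ) (ha : ‖V‖ = a) (ha1 : a < 1)
    (C₃ lam₃ : ℝ) (hC₃ : 0 < C₃) (hlam₃ : 0 < lam₃)
    (hH2 : ∀ h : Y, ‖h‖ ≤ lam₃ → ‖φ Tbar 0 (x 0 + h) - x Tbar - V h‖ ≤ C₃ * ‖h‖ ^ 2) :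
    ∀ ε : ℝ, 0 < ε → a + ε < 1 →
      ∃ δ > (0 : ℝ), ∃ D > (0 : ℝ), ∀ (t₀ t : ℝ) (h : Y), t₀ ≤ t → ‖h‖ ≤ δ →
        ‖φ t t₀ (x t₀ + h) - x t‖ ≤
          D * Real.exp (Real.log (a + ε) * (t - t₀) / Tbar) * ‖h‖ := by
  intro ε hε hb1
  have ha0 : 0 ≤ a := ha ▸ norm_nonneg V
  set b : ℝ := a + ε with hb
  have hb0 : 0 < b := by linarith
  have hC0 : 0 < C₁ := by linarith
  have hφ_int (k : ℤ) (t₀ t : ℝ) (y : Y) (h : t₀ ≤ t) :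
      φ (t + k * Tbar) (t₀ + k * Tbar) y = φ t t₀ y := by
    have hp : Function.Periodic (fun u : ℝ => φ (t + u) (t₀ + u) y) Tbar := by
      intro u
      have := hφ_per (t₀ + u) (t + u) y (by linarith)
      simpa only [add_assoc] using this
    simpa using hp.int_mul k 0
  have hx_int (k : ℤ) (t : ℝ) : x (t + k * Tbar) = x t :=
    Function.Periodic.int_mul (f := x) hx_per k t
  obtain ⟨ρ, hρ0, hρ1, hρ3, hρε⟩ :
      ∃ ρ > (0 : ℝ), ρ ≤ lam₁ ∧ ρ ≤ lam₃ ∧ C₃ * ρ ≤ ε := by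
    refine ⟨min lam₁ (min lam₃ (ε / C₃)), by positivity, min_le_left _ _,
      (min_le_right _ _).trans (min_le_left _ _), ?_⟩
    rw [mul_comm, ← le_div_iff₀ hC₃]
    exact (min_le_right _ _).trans (min_le_right _ _)
  have hstep0 (h : Y) (hh : ‖h‖ ≤ ρ) : ‖φ Tbar 0 (x 0 + h) - x Tbar‖ ≤ b * ‖h‖ := by
    have h2 := hH2 h (hh.trans hρ3)
    have hV : ‖V h‖ ≤ a * ‖h‖ := ha ▸ V.le_opNorm h
    have htri := norm_add_le (φ Tbar 0 (x 0 + h) - x Tbar - V h) (V h)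
    rw [sub_add_cancel] at htri
    have hsq : C₃ * ‖h‖ ^ 2 ≤ ε * ‖h‖ := by
      have : C₃ * ‖h‖ ≤ ε := (mul_le_mul_of_nonneg_left hh hC₃.le).trans hρε
      nlinarith [norm_nonneg h]
    rw [hb, add_mul]
    linarith
  have hstep (k : ℤ) (h : Y) (hh : ‖h‖ ≤ ρ) :
      ‖φ (k * Tbar + Tbar) (k * Tbar) (x (k * Tbar) + h) - x (k * Tbar + Tbar)‖ ≤ b * ‖h‖ := by
    have e1 := hφ_int k 0 Tbar (x 0 + h) hTbar.le
    have e2 := hx_int k 0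
    have e3 := hx_int k Tbar
    rw [zero_add] at e1 e2
    rw [add_comm (k * Tbar : ℝ) Tbar, e2, e1, e3]
    exact hstep0 h hh
  have hiter (k : ℤ) (h : Y) (hh : ‖h‖ ≤ ρ) (n : ℕ) :
      ‖φ (k * Tbar + n * Tbar) (k * Tbar) (x (k * Tbar) + h) - x (k * Tbar + n * Tbar)‖
        ≤ b ^ n * ‖h‖ := by
    induction n with
    | zero => simp [hφ_id]
    | succ n ih =>
      set g := φ (k * Tbar + n * Tbar) (k * Tbar) (x (k * Tbar) + h)
        - x (k * Tbar + n * Tbar) with hg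
      have hgρ : ‖g‖ ≤ ρ :=
        (ih.trans (mul_le_of_le_one_left (norm_nonneg h) (pow_le_one₀ hb0.le hb1.le))).trans hh
      have h1 := hstep (k + n) g hgρ
      have e1 : (((k + n : ℤ) : ℝ)) * Tbar = k * Tbar + n * Tbar := by push_cast; ring
      have e2 : (k * Tbar + ((n + 1 : ℕ) : ℝ) * Tbar) = k * Tbar + n * Tbar + Tbar := by
        push_cast; ring
      have hn : 0 ≤ (n : ℝ) * Tbar := by positivity
      rw [e1, hg, add_sub_cancel, hφ_comp _ _ _ _ (by linarith) (by linarith), ← hg] at h1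
      rw [e2, pow_succ']
      calc _ ≤ b * ‖g‖ := h1
        _ ≤ b * (b ^ n * ‖h‖) := mul_le_mul_of_nonneg_left ih hb0.le
        _ = _ := by ring
  refine ⟨ρ / C₁, by positivity, C₁ ^ 2 * (1 / b ^ 2), by positivity, ?_⟩
  intro t₀ t h ht hh
  have hCh : C₁ * ‖h‖ ≤ ρ := by
    rw [mul_comm]
    exact (le_div_iff₀ hC0).1 hh
  have hh1 : ‖h‖ ≤ lam₁ := by nlinarith [norm_nonneg h]
  -- It suffices to bound the deviation by `C₁² bⁿ ‖h‖` for some `n` with `t - t₀ ≤ (n + 2) T̄`.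
  suffices hmain : ∃ n : ℕ, t - t₀ ≤ (n + 2) * Tbar ∧
      ‖φ t t₀ (x t₀ + h) - x t‖ ≤ C₁ ^ 2 * b ^ n * ‖h‖ by
    obtain ⟨n, hn, hle⟩ := hmain
    refine hle.trans (mul_le_mul_of_nonneg_right ?_ (norm_nonneg h))
    rw [mul_assoc]
    exact mul_le_mul_of_nonneg_left (pow_le_div_sq_mul_exp hb0 hb1 hTbar n hn) (by positivity)
  -- The first multiple of the period after `t₀`.
  set k : ℤ := ⌈t₀ / Tbar⌉ with hk
  have hk1 : t₀ ≤ k * Tbar := (div_le_iff₀ hTbar).1 (Int.le_ceil _)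
  have hk2 : k * Tbar ≤ t₀ + Tbar := by
    have h1 := (Int.ceil_lt_add_one (t₀ / Tbar)).le
    have h2 := mul_le_mul_of_nonneg_right h1 hTbar.le
    rwa [add_mul, div_mul_cancel₀ _ hTbar.ne', one_mul] at h2
  rcases le_total t (k * Tbar) with htk | htk
  · refine ⟨0, by push_cast; linarith, ?_⟩
    refine ((hH1 t₀ h hh1 t ht (htk.trans hk2)).trans (min_le_left _ _)).trans ?_
    rw [pow_zero, mul_one]
    exact mul_le_mul_of_nonneg_right (by nlinarith) (norm_nonneg h)
  · set n : ℕ := ⌊(t - k * Tbar) / Tbar⌋₊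
    have hn1 : n * Tbar ≤ t - k * Tbar :=
      (le_div_iff₀ hTbar).1 (Nat.floor_le (div_nonneg (by linarith) hTbar.le))
    have hn2 : t - k * Tbar < (n + 1) * Tbar :=
      (div_lt_iff₀ hTbar).1 (Nat.lt_floor_add_one _)
    have hn0 : 0 ≤ (n : ℝ) * Tbar := by positivity
    refine ⟨n, by linarith, ?_⟩
    set g := φ (k * Tbar) t₀ (x t₀ + h) - x (k * Tbar) with hg
    have hg1 : ‖g‖ ≤ C₁ * ‖h‖ := (hH1 t₀ h hh1 _ hk1 hk2).trans (min_le_left _ _)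
    have h2 := hiter k g (hg1.trans hCh) n
    rw [hg, add_sub_cancel, hφ_comp _ _ _ _ hk1 (by linarith), ← hg] at h2
    set f := φ (k * Tbar + n * Tbar) t₀ (x t₀ + h) - x (k * Tbar + n * Tbar) with hf
    have hf1 : ‖f‖ ≤ lam₁ :=
      (h2.trans (mul_le_of_le_one_left (norm_nonneg g) (pow_le_one₀ hb0.le hb1.le))).trans
        ((hg1.trans hCh).trans hρ1)
    have h3 := (hH1 (k * Tbar + n * Tbar) f hf1 t (by linarith) (by linarith)).trans
      (min_le_left _ _)
    rw [hf, add_sub_cancel, hφ_comp _ _ _ _ (by linarith) (by linarith), ← hf] at h3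
    calc _ ≤ C₁ * ‖f‖ := h3
      _ ≤ C₁ * (b ^ n * (C₁ * ‖h‖)) := by gcongr; exact h2.trans (by gcongr)
      _ = _ := by ring
end

section
/- In the abstract semilinear setting, for every initial time t₀ ∈ ℝ and every initial datum x⁰ ∈ Y there exists T > 0 such that there is exactly one mild solution x : [t₀, t₀ + T] → Y of x' = Lx + f(t, x) with x(t₀) = x⁰. -/
/-!
The mild solution is the Banach fixed point of the Duhamel map
`x ↦ S (t - t₀) x0 + ∫ T' (t - s) (f s (x s)) ds` on the complete space of continuous functions
from `[t₀, t₀ + T]` to the closed unit ball around `x0`. The singularity `r ^ (-γ)` of the kernel is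
integrable, so the integral term costs a factor of order `T ^ (1 - γ)` (`norm_duhamel_le`); for small
`T` the map therefore preserves the ball and halves distances. That it produces continuous
functions is `duhamel_continuousOn`.

Uniqueness holds among all mild solutions on `[t₀, t₀ + T]`, not just those in the ball: the bound
showing that the ball is preserved in fact confines the image to the ball of radius `1/2`, so a
continuous solution has no first time at which it reaches distance `1` from `x0`
(`mem_ball_of_trap`). Hence every mild solution is a fixed point of the same contraction.
-/

open MeasureTheory Set

/-- A mild (Duhamel) solution on `[t₀, t₀ + T]` with initial datum `x0` of the abstract
semilinear problem `x' = Lx + f(t,x)`, where `S` is the semigroup generated by `L` on `Y`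
and `T'` is its extension acting from `W` into `Y`:  a continuous function
`x : [t₀, t₀+T] → Y` satisfying `x t = S (t−t₀) x0 + ∫_{t₀}^t T' (t−s) (f s (x s)) ds`. -/
def IsMildSolution {Y W : Type*} [NormedAddCommGroup Y] [NormedSpace ℝ Y]
    [NormedAddCommGroup W] [NormedSpace ℝ W]
    (S : ℝ → Y →L[ℝ] Y) (T' : ℝ → W →L[ℝ] Y) (f : ℝ → Y → W)
    (t₀ T : ℝ) (x0 : Y) (x : ℝ → Y) : Prop :=
  ContinuousOn x (Set.Icc t₀ (t₀ + T)) ∧ x t₀ = x0 ∧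
    (∀ t ∈ Set.Icc t₀ (t₀ + T),
      IntervalIntegrable (fun s => T' (t - s) (f s (x s))) MeasureTheory.volume t₀ t) ∧
    ∀ t ∈ Set.Icc t₀ (t₀ + T),
      x t = S (t - t₀) x0 + ∫ s in t₀..t, T' (t - s) (f s (x s))

open Filter Topology

/-- The Duhamel integral against a kernel with an integrable singularity `A r^{-γ}` costs
only the factor `A (t - t₀)^{1-γ} / (1-γ)`, which is small for short times. The bound on `u` is
only needed strictly before the time `t`. -/
lemma norm_duhamel_le {Y W : Type*} [NormedAddCommGroup Y] [NormedSpace ℝ Y]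
    [NormedAddCommGroup W] [NormedSpace ℝ W] {T' : ℝ → W →L[ℝ] Y} {A γ : ℝ}
    (hA : 0 ≤ A) (hγ1 : γ < 1)
    (hT' : ∀ r ∈ Ioc (0 : ℝ) 1, ‖T' r‖ ≤ A * r ^ (-γ))
    {t₀ t T K : ℝ} (hT1 : T ≤ 1) (ht : t ∈ Icc t₀ (t₀ + T)) {u : ℝ → W} (hK : 0 ≤ K)
    (hu : ∀ s ∈ Ico t₀ t, ‖u s‖ ≤ K) :
    ‖∫ s in t₀..t, T' (t - s) (u s)‖ ≤ K * (A * (T ^ (1 - γ) / (1 - γ))) := by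
  have h1 : ‖∫ s in t₀..t, T' (t - s) (u s)‖ ≤ ∫ s in t₀..t, A * K * (t - s) ^ (-γ) := by
    refine intervalIntegral.norm_integral_le_of_norm_le ht.1 ?_ ?_
    · have : ∀ᵐ s : ℝ, s ≠ t := by simp [ae_iff]
      filter_upwards [this] with s hs hs'
      have hst : s < t := lt_of_le_of_ne hs'.2 hs
      have h2 := hT' (t - s) ⟨by linarith, by linarith [ht.2, hs'.1]⟩
      have h3 := hu s ⟨hs'.1.le, hst⟩
      calc ‖T' (t - s) (u s)‖ ≤ ‖T' (t - s)‖ * ‖u s‖ := (T' (t - s)).le_opNorm _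
        _ ≤ (A * (t - s) ^ (-γ)) * K := by
            gcongr
        _ = _ := by ring
    · have := (intervalIntegral.intervalIntegrable_rpow' (a := t - t₀) (b := t - t)
        (r := -γ) (by linarith)).comp_sub_left t
      simp only [sub_sub_cancel] at this
      exact this.const_mul _
  refine h1.trans ?_
  rw [intervalIntegral.integral_const_mul,
    intervalIntegral.integral_comp_sub_left (fun r => r ^ (-γ)) t, sub_self,
    integral_rpow (Or.inl (by linarith)), Real.zero_rpow (by linarith)]
  have h4 : (t - t₀) ^ (-γ + 1) ≤ T ^ (1 - γ) := by
    rw [neg_add_eq_sub]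
    exact Real.rpow_le_rpow (by linarith [ht.1]) (by linarith [ht.2]) (by linarith)
  have h5 : 0 < 1 - γ := by linarith
  rw [sub_zero, neg_add_eq_sub] at *
  calc A * K * ((t - t₀) ^ (1 - γ) / (1 - γ)) ≤ A * K * (T ^ (1 - γ) / (1 - γ)) := by gcongr
    _ = _ := by ring

/-- Strong continuity together with local boundedness in operator norm gives joint continuity of
`(r, w) ↦ T' r w`, hence measurability of the Duhamel integrand. -/
lemma continuousOn_apply_kernel {Y W : Type*} [NormedAddCommGroup Y] [NormedSpace ℝ Y]
    [NormedAddCommGroup W] [NormedSpace ℝ W] {T' : ℝ → W →L[ℝ] Y} {A γ : ℝ}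
    (hT' : ∀ r ∈ Ioc (0 : ℝ) 1, ‖T' r‖ ≤ A * r ^ (-γ))
    (hT'_cont : ∀ w : W, ContinuousOn (fun t => T' t w) (Ioi (0 : ℝ)))
    {v : ℝ → W} (hv : Continuous v) :
    ContinuousOn (fun r => T' r (v r)) (Ioc (0 : ℝ) 1) := by
  intro r₀ hr₀
  have h1 : Tendsto (fun r => T' r (v r - v r₀)) (𝓝[Ioc 0 1] r₀) (𝓝 0) := by
    have hb : Tendsto (fun r : ℝ => A * r ^ (-γ) * ‖v r - v r₀‖) (𝓝[Ioc 0 1] r₀) (𝓝 0) := by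
      have : ContinuousAt (fun r : ℝ => A * r ^ (-γ) * ‖v r - v r₀‖) r₀ :=
        (continuousAt_const.mul (Real.continuousAt_rpow_const _ _ (Or.inl hr₀.1.ne'))).mul
          (hv.continuousAt.sub continuousAt_const).norm
      have h := this.tendsto
      simp only [sub_self, norm_zero, mul_zero] at h
      exact h.mono_left nhdsWithin_le_nhds
    refine squeeze_zero_norm' ?_ hb
    filter_upwards [self_mem_nhdsWithin] with r hr
    exact (T' r).le_of_opNorm_le (hT' r hr) _
  have h2 : Tendsto (fun r => T' r (v r₀)) (𝓝[Ioc 0 1] r₀) (𝓝 (T' r₀ (v r₀))) :=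
    (hT'_cont (v r₀) r₀ hr₀.1).mono_left (nhdsWithin_mono _ Ioc_subset_Ioi_self)
  have h3 := h1.add h2
  simp only [map_sub, sub_add_cancel, zero_add] at h3
  exact h3

/-- The Duhamel integral of a continuous forcing is well defined and continuous in time. After the
substitution `r = t - s` the singularity sits at the fixed point `r = 0`, and dominated
convergence applies with the majorant `A K |r^{-γ}|`. -/
lemma duhamel_continuousOn {Y W : Type*} [NormedAddCommGroup Y] [NormedSpace ℝ Y]
    [NormedAddCommGroup W] [NormedSpace ℝ W] {T' : ℝ → W →L[ℝ] Y} {A γ : ℝ}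
    (hA : 0 ≤ A) (hγ1 : γ < 1)
    (hT' : ∀ r ∈ Ioc (0 : ℝ) 1, ‖T' r‖ ≤ A * r ^ (-γ))
    (hT'_cont : ∀ w : W, ContinuousOn (fun t => T' t w) (Ioi (0 : ℝ)))
    {t₀ T : ℝ} (hT0 : 0 ≤ T) (hT1 : T ≤ 1) {u : ℝ → W} (hu : ContinuousOn u (Icc t₀ (t₀ + T))) :
    (∀ t ∈ Icc t₀ (t₀ + T), IntervalIntegrable (fun s => T' (t - s) (u s)) volume t₀ t) ∧
      ContinuousOn (fun t => ∫ s in t₀..t, T' (t - s) (u s)) (Icc t₀ (t₀ + T)) := by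
  have hle : t₀ ≤ t₀ + T := by linarith
  -- replace the forcing by a bounded continuous function on the whole line
  set g : ℝ → W := IccExtend hle (fun i => u i) with hg
  have hgc : Continuous g := hu.domRestrict.Icc_extend'
  have hgu : ∀ s ∈ Icc t₀ (t₀ + T), g s = u s := fun s hs => IccExtend_of_mem hle _ hs
  obtain ⟨K, hK⟩ : ∃ K, ∀ s, ‖g s‖ ≤ K := by
    obtain ⟨K, hK⟩ := isCompact_Icc.exists_bound_of_continuousOn hu
    exact ⟨K, fun s => hK _ (projIcc t₀ (t₀ + T) hle s).2⟩
  have hK0 : 0 ≤ K := (norm_nonneg _).trans (hK 0)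
  -- cut the kernel off outside `(0, 1]`, where nothing is known about it
  let F : ℝ → ℝ → Y := fun t => (Ioc (0 : ℝ) 1).indicator (fun r => T' r (g (t - r)))
  have hFm : ∀ t, AEStronglyMeasurable (F t) volume := fun t =>
    (aestronglyMeasurable_indicator_iff measurableSet_Ioc).2
      ((continuousOn_apply_kernel hT' hT'_cont
        (hgc.comp (continuous_const.sub continuous_id))).aestronglyMeasurable measurableSet_Ioc)
  have hFb : ∀ t r, ‖F t r‖ ≤ A * K * ‖r ^ (-γ)‖ := by
    intro t r
    by_cases hr : r ∈ Ioc (0 : ℝ) 1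
    · simp only [F, indicator_of_mem hr]
      calc ‖T' r (g (t - r))‖ ≤ (A * r ^ (-γ)) * ‖g (t - r)‖ := (T' r).le_of_opNorm_le (hT' r hr) _
        _ ≤ (A * ‖r ^ (-γ)‖) * K := by
            gcongr
            · exact le_abs_self _
            · exact hK _
        _ = _ := by ring
    · simp only [F, indicator_of_notMem hr, norm_zero]
      positivity
  have hbi : ∀ a b : ℝ, IntervalIntegrable (fun r : ℝ => A * K * ‖r ^ (-γ)‖) volume a b :=
    fun a b => (intervalIntegral.intervalIntegrable_rpow' (by linarith)).norm.const_mul _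
  have hFi : ∀ t a b, IntervalIntegrable (F t) volume a b := fun t a b =>
    (hbi a b).mono_fun (hFm t).restrict (Eventually.of_forall fun r =>
      (hFb t r).trans (le_abs_self _))
  have hFc : ∀ r, Continuous fun t => F t r := by
    intro r
    by_cases hr : r ∈ Ioc (0 : ℝ) 1
    · simp only [F, indicator_of_mem hr]
      fun_prop
    · simp only [F, indicator_of_notMem hr]
      fun_prop
  have hcont : Continuous fun t => ∫ r in (0 : ℝ)..(t - t₀), F t r := by
    rw [continuous_iff_continuousAt]
    intro t
    have h := intervalIntegral.continuousAt_parametric_primitive_of_dominated (μ := volume)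
      (F := F) (fun r : ℝ => A * K * ‖r ^ (-γ)‖) (min 0 (t - t₀) - 1) (max 0 (t - t₀) + 1)
      (a₀ := 0) (b₀ := t - t₀) (x₀ := t) (fun t => (hFm t).restrict)
      (Eventually.of_forall fun t => Eventually.of_forall fun r => hFb t r) (hbi _ _)
      (Eventually.of_forall fun r => (hFc r).continuousAt)
      ⟨by linarith [min_le_left 0 (t - t₀)], by linarith [le_max_left 0 (t - t₀)]⟩
      ⟨by linarith [min_le_right 0 (t - t₀)], by linarith [le_max_right 0 (t - t₀)]⟩
      (by simp)
    exact ContinuousAt.comp (f := fun t => (t, t - t₀)) (x := t) h (by fun_prop)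
  -- the integrands agree off the null endpoint `s = t`
  have hEq : ∀ t ∈ Icc t₀ (t₀ + T), EqOn (fun s => F t (t - s)) (fun s => T' (t - s) (u s))
      (Ioo t₀ t) := by
    intro t ht s hs
    have hr : t - s ∈ Ioc (0 : ℝ) 1 := ⟨by linarith [hs.2], by linarith [hs.1, ht.2]⟩
    simp only [F, indicator_of_mem hr, sub_sub_cancel]
    rw [hgu s ⟨hs.1.le, by linarith [hs.2, ht.2]⟩]
  have hae : ∀ t ∈ Icc t₀ (t₀ + T), ∀ᵐ s : ℝ, s ∈ uIoc t₀ t →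
      F t (t - s) = T' (t - s) (u s) := by
    intro t ht
    have : ∀ᵐ s : ℝ, s ≠ t := by simp [ae_iff]
    filter_upwards [this] with s hs hs'
    rw [uIoc_of_le ht.1] at hs'
    exact hEq t ht ⟨hs'.1, lt_of_le_of_ne hs'.2 hs⟩
  refine ⟨fun t ht => ?_, hcont.continuousOn.congr fun t ht => ?_⟩
  · have h := (hFi t (t - t₀) (t - t)).comp_sub_left t
    simp only [sub_sub_cancel] at h
    exact h.congr_ae ((ae_restrict_iff' measurableSet_uIoc).2 (hae t ht))
  · have h := intervalIntegral.integral_comp_sub_left (a := t₀) (b := t) (F t) t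
    rw [sub_self] at h
    simp only [← h]
    exact intervalIntegral.integral_congr_ae ((hae t ht).mono fun s hs h => (hs h).symm)

/-- Continuity argument: if staying in the closed unit ball around `x0` at all earlier times forces a
continuous curve into the open unit ball, then it never leaves that ball, since there is no first
exit time. -/
lemma mem_ball_of_trap {Y : Type*} [NormedAddCommGroup Y] {a b : ℝ} {x0 : Y} {y : ℝ → Y}
    (hy : ContinuousOn y (Icc a b))
    (h : ∀ t ∈ Icc a b, (∀ s ∈ Ico a t, ‖y s - x0‖ ≤ 1) → ‖y t - x0‖ < 1) :
    ∀ t ∈ Icc a b, ‖y t - x0‖ < 1 := by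
  by_contra! hcon
  obtain ⟨t₁, ht₁, hb⟩ := hcon
  have hcomp : IsCompact (Icc a b ∩ (fun t => ‖y t - x0‖) ⁻¹' Ici 1) :=
    isCompact_Icc.of_isClosed_subset
      ((hy.sub continuousOn_const).norm.preimage_isClosed_of_isClosed isClosed_Icc isClosed_Ici)
      inter_subset_left
  obtain ⟨t, ⟨ht, htb⟩, hmin⟩ := hcomp.exists_isLeast ⟨t₁, ht₁, hb⟩
  refine absurd (h t ht fun s hs => ?_) (not_lt.2 htb)
  by_contra! hs1
  exact absurd (hmin ⟨⟨hs.1, hs.2.le.trans ht.2⟩, hs1.le⟩) (not_le.2 hs.2)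

/-- In the abstract semilinear setting, for every initial time `t₀ ∈ ℝ` and
every initial datum `x0 ∈ Y` there exists `T > 0` such that there is exactly one mild
solution `x : [t₀, t₀ + T] → Y` of `x' = Lx + f(t,x)` with `x(t₀) = x0`. -/
theorem exists_unique_local_mild_solution
    {Y W : Type*} [NormedAddCommGroup Y] [NormedSpace ℝ Y] [CompleteSpace Y]
    [NormedAddCommGroup W] [NormedSpace ℝ W] [CompleteSpace W]
    (J : Y →L[ℝ] W) (hJ : Function.Injective J)
    (S : ℝ → Y →L[ℝ] Y)
    (hS0 : S 0 = ContinuousLinearMap.id ℝ Y)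
    (hS_semigroup : ∀ s t : ℝ, 0 ≤ s → 0 ≤ t → S (t + s) = (S t).comp (S s))
    (hS_cont : ∀ y : Y, ContinuousOn (fun t => S t y) (Set.Ici (0 : ℝ)))
    (M₁ κ₁ : ℝ) (hM₁ : 0 < M₁) (hκ₁ : 0 < κ₁)
    (hS_bound : ∀ t : ℝ, 0 ≤ t → ‖S t‖ ≤ M₁ * Real.exp (κ₁ * t))
    (T' : ℝ → W →L[ℝ] Y)
    (hT'J : ∀ t : ℝ, 0 < t → (T' t).comp J = S t)
    (hT'S : ∀ s t : ℝ, 0 < s → 0 < t → T' (t + s) = (S t).comp (T' s))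
    (M₂ κ₂ γ : ℝ) (hM₂ : 0 < M₂) (hκ₂ : 0 < κ₂) (hγ0 : 0 ≤ γ) (hγ1 : γ < 1)
    (hT'_bound : ∀ t : ℝ, 0 < t → ‖T' t‖ ≤ M₂ * Real.exp (κ₂ * t) * t ^ (-γ))
    (hT'_cont : ∀ w : W, ContinuousOn (fun t => T' t w) (Set.Ioi (0 : ℝ)))
    (f : ℝ → Y → W)
    (hf_cont : Continuous fun p : ℝ × Y => f p.1 p.2)
    (hf_lip : ∀ R : ℝ, 0 < R → ∃ C > (0 : ℝ), ∀ (t : ℝ) (x y : Y),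
      ‖x‖ ≤ R → ‖y‖ ≤ R → ‖f t x - f t y‖ ≤ C * ‖x - y‖) :
    ∀ (t₀ : ℝ) (x0 : Y), ∃ T > (0 : ℝ), ∃ x : ℝ → Y,
      IsMildSolution S T' f t₀ T x0 x ∧
        ∀ y : ℝ → Y, IsMildSolution S T' f t₀ T x0 y →
          Set.EqOn y x (Set.Icc t₀ (t₀ + T)) := by
  intro t₀ x0
  obtain ⟨C, hC, hlip⟩ := hf_lip (‖x0‖ + 1) (by positivity)
  have hballR : ∀ y : Y, ‖y - x0‖ ≤ 1 → ‖y‖ ≤ ‖x0‖ + 1 := fun y hy => by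
    have := norm_sub_norm_le y x0
    linarith
  set A : ℝ := M₂ * Real.exp κ₂ with hAdef
  have hA : 0 ≤ A := by positivity
  have hT' : ∀ r ∈ Ioc (0 : ℝ) 1, ‖T' r‖ ≤ A * r ^ (-γ) := by
    intro r hr
    refine (hT'_bound r hr.1).trans ?_
    have : 0 ≤ r ^ (-γ) := Real.rpow_nonneg hr.1.le _
    rw [hAdef]
    gcongr
    nlinarith [hr.2]
  -- `f` is bounded on `[t₀, t₀ + 1]` times the unit ball around `x0`
  obtain ⟨K, hK0, hK⟩ : ∃ K, 0 ≤ K ∧ ∀ t ∈ Icc t₀ (t₀ + 1), ∀ y : Y, ‖y - x0‖ ≤ 1 →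
      ‖f t y‖ ≤ K := by
    obtain ⟨K₀, hK₀⟩ := (isCompact_Icc (a := t₀) (b := t₀ + 1)).exists_bound_of_continuousOn
      (f := fun t => f t x0)
      (hf_cont.comp (continuous_id.prodMk continuous_const)).continuousOn
    have h0 : 0 ≤ K₀ := (norm_nonneg _).trans (hK₀ t₀ ⟨le_rfl, by linarith⟩)
    refine ⟨K₀ + C, by positivity, fun t ht y hy => ?_⟩
    have h1 := hlip t y x0 (hballR y hy) (by linarith)
    have h2 := norm_le_norm_add_norm_sub' (f t y) (f t x0)
    have h3 := hK₀ t ht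
    have h4 : C * ‖y - x0‖ ≤ C * 1 := by gcongr
    linarith
  -- choice of a short time interval
  obtain ⟨T, ⟨hT0, hT1⟩, hTS, hTK, hTC⟩ : ∃ T : ℝ, T ∈ Ioo (0 : ℝ) 1 ∧
      (∀ τ ∈ Icc (0 : ℝ) T, ‖S τ x0 - x0‖ ≤ 1 / 4) ∧
      K * (A * (T ^ (1 - γ) / (1 - γ))) ≤ 1 / 4 ∧ C * (A * (T ^ (1 - γ) / (1 - γ))) ≤ 1 / 2 := by
    have e1 : ∀ᶠ T : ℝ in 𝓝[>] 0, T ∈ Ioo (0 : ℝ) 1 := Ioo_mem_nhdsGT one_pos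
    have e2 : ∀ᶠ T : ℝ in 𝓝[>] 0, ∀ τ ∈ Icc (0 : ℝ) T, ‖S τ x0 - x0‖ ≤ 1 / 4 := by
      have h := ((hS_cont x0 0 self_mem_Ici).sub (continuousWithinAt_const (b := x0))).norm
      have h' := h.tendsto
      simp only [Pi.sub_apply, hS0, ContinuousLinearMap.id_apply, sub_self, norm_zero] at h'
      have h2 := h'.eventually (ge_mem_nhds (by norm_num : (0 : ℝ) < 1 / 4))
      obtain ⟨b, hb, hsub⟩ := mem_nhdsGE_iff_exists_Ico_subset.1 h2
      filter_upwards [Ioo_mem_nhdsGT hb] with T hT τ hτ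
      exact hsub ⟨hτ.1, hτ.2.trans_lt hT.2⟩
    have e3 : ∀ c : ℝ, Tendsto (fun T : ℝ => c * (A * (T ^ (1 - γ) / (1 - γ)))) (𝓝[>] 0)
        (𝓝 0) := by
      intro c
      have h : ContinuousAt (fun T : ℝ => c * (A * (T ^ (1 - γ) / (1 - γ)))) 0 :=
        continuousAt_const.mul (continuousAt_const.mul
          ((Real.continuousAt_rpow_const _ _ (Or.inr (by linarith))).div_const _))
      have h' := h.tendsto
      rw [Real.zero_rpow (by linarith)] at h'
      simp only [zero_div, mul_zero] at h'
      exact h'.mono_left nhdsWithin_le_nhds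
    exact (e1.and (e2.and (((e3 K).eventually (ge_mem_nhds (by norm_num))).and
      ((e3 C).eventually (ge_mem_nhds (by norm_num)))))).exists
  have hle : t₀ ≤ t₀ + T := by linarith
  have hsubI : Icc t₀ (t₀ + T) ⊆ Icc t₀ (t₀ + 1) := Icc_subset_Icc_right (by linarith)
  let D : (ℝ → Y) → ℝ → Y := fun y t => S (t - t₀) x0 + ∫ s in t₀..t, T' (t - s) (f s (y s))
  have hf_comp : ∀ y : ℝ → Y, ContinuousOn y (Icc t₀ (t₀ + T)) →
      ContinuousOn (fun s => f s (y s)) (Icc t₀ (t₀ + T)) := fun y hy =>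
    hf_cont.comp_continuousOn (continuousOn_id.prodMk hy)
  have hDcont : ∀ y : ℝ → Y, ContinuousOn y (Icc t₀ (t₀ + T)) →
      ContinuousOn (D y) (Icc t₀ (t₀ + T)) := by
    intro y hy
    refine ContinuousOn.add ?_
      (duhamel_continuousOn hA hγ1 hT' hT'_cont hT0.le hT1.le (hf_comp y hy)).2
    exact (hS_cont x0).comp (f := fun t => t - t₀) (by fun_prop)
      fun t ht => sub_nonneg.2 ht.1
  -- only the past of `y` matters, which is what rules out a first exit time below
  have hDball : ∀ y : ℝ → Y, ∀ t ∈ Icc t₀ (t₀ + T), (∀ s ∈ Ico t₀ t, ‖y s - x0‖ ≤ 1) →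
      ‖D y t - x0‖ ≤ 1 / 2 := by
    intro y t ht hy
    have h1 := norm_duhamel_le (u := fun s => f s (y s)) hA hγ1 hT' hT1.le ht hK0
      fun s hs => hK s (hsubI ⟨hs.1, hs.2.le.trans ht.2⟩) _ (hy s hs)
    have h2 := hTS (t - t₀) ⟨by linarith [ht.1], by linarith [ht.2]⟩
    have h3 : D y t - x0 = (S (t - t₀) x0 - x0) + ∫ s in t₀..t, T' (t - s) (f s (y s)) := by
      simp only [D]
      abel
    rw [h3]
    refine (norm_add_le _ _).trans ?_
    linarith
  have hDlip : ∀ y z : ℝ → Y, ContinuousOn y (Icc t₀ (t₀ + T)) →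
      ContinuousOn z (Icc t₀ (t₀ + T)) → (∀ t ∈ Icc t₀ (t₀ + T), ‖y t - x0‖ ≤ 1) →
      (∀ t ∈ Icc t₀ (t₀ + T), ‖z t - x0‖ ≤ 1) → ∀ d : ℝ, 0 ≤ d →
      (∀ t ∈ Icc t₀ (t₀ + T), ‖y t - z t‖ ≤ d) →
      ∀ t ∈ Icc t₀ (t₀ + T), ‖D y t - D z t‖ ≤ 1 / 2 * d := by
    intro y z hy hz hyb hzb d hd hyz t ht
    have iy := (duhamel_continuousOn hA hγ1 hT' hT'_cont hT0.le hT1.le (hf_comp y hy)).1 t ht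
    have iz := (duhamel_continuousOn hA hγ1 hT' hT'_cont hT0.le hT1.le (hf_comp z hz)).1 t ht
    have h1 : D y t - D z t = ∫ s in t₀..t, T' (t - s) (f s (y s) - f s (z s)) := by
      simp only [D, add_sub_add_left_eq_sub, map_sub]
      exact (intervalIntegral.integral_sub iy iz).symm
    rw [h1]
    refine (norm_duhamel_le (u := fun s => f s (y s) - f s (z s)) (K := C * d) hA hγ1 hT' hT1.le
      ht (by positivity) fun s hs => ?_).trans ?_
    · have hs' : s ∈ Icc t₀ (t₀ + T) := ⟨hs.1, hs.2.le.trans ht.2⟩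
      refine (hlip s _ _ (hballR _ (hyb s hs')) (hballR _ (hzb s hs'))).trans ?_
      gcongr
      exact hyz s hs'
    · calc C * d * (A * (T ^ (1 - γ) / (1 - γ))) = C * (A * (T ^ (1 - γ) / (1 - γ))) * d := by ring
        _ ≤ 1 / 2 * d := by gcongr
  -- the complete metric space carrying the contraction
  let X := C(Icc t₀ (t₀ + T), Metric.closedBall x0 1)
  have : CompleteSpace (Metric.closedBall x0 1) := Metric.isClosed_closedBall.completeSpace_coe
  have : Nonempty X := ⟨ContinuousMap.const _ ⟨x0, by simp⟩⟩
  let ext : X → ℝ → Y := fun x => IccExtend hle fun i => (x i : Y)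
  have hext_mem : ∀ (x : X) (i : Icc t₀ (t₀ + T)), ext x i = x i := fun x i =>
    IccExtend_val hle _ i
  have hext_cont : ∀ x : X, ContinuousOn (ext x) (Icc t₀ (t₀ + T)) := fun x =>
    (continuous_subtype_val.comp x.continuous).Icc_extend'.continuousOn
  have hext_ball : ∀ (x : X) (t : ℝ), ‖ext x t - x0‖ ≤ 1 := fun x t =>
    mem_closedBall_iff_norm.1 (x (projIcc t₀ (t₀ + T) hle t)).2
  let toX : ∀ y : ℝ → Y, ContinuousOn y (Icc t₀ (t₀ + T)) →
      (∀ t ∈ Icc t₀ (t₀ + T), ‖y t - x0‖ ≤ 1) → X := fun y hy hb =>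
    ⟨fun i => ⟨y i, mem_closedBall_iff_norm.2 (hb i i.2)⟩, hy.domRestrict.subtype_mk _⟩
  let Φ : X → X := fun x => toX (D (ext x)) (hDcont _ (hext_cont x)) fun t ht =>
    (hDball _ t ht fun s _ => hext_ball x s).trans (by norm_num)
  have hΦ : ContractingWith (1 / 2) Φ := by
    refine ⟨by rw [← NNReal.coe_lt_coe]; norm_num, LipschitzWith.of_dist_le_mul fun x z => ?_⟩
    rw [ContinuousMap.dist_le (by positivity)]
    intro i
    have h := hDlip (ext x) (ext z) (hext_cont x) (hext_cont z) (fun t _ => hext_ball x t)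
      (fun t _ => hext_ball z t) (dist x z) dist_nonneg (fun t ht => by
        have h1 := ContinuousMap.dist_apply_le_dist (f := x) (g := z) ⟨t, ht⟩
        rw [Subtype.dist_eq, dist_eq_norm] at h1
        rwa [hext_mem x ⟨t, ht⟩, hext_mem z ⟨t, ht⟩]) i i.2
    rw [Subtype.dist_eq, dist_eq_norm]
    have hhalf : ((1 / 2 : NNReal) : ℝ) = 1 / 2 := by norm_num
    rw [hhalf]
    exact h
  -- values on the interval determine the Duhamel map there
  have hDcongr : ∀ y z : ℝ → Y, EqOn y z (Icc t₀ (t₀ + T)) →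
      EqOn (D y) (D z) (Icc t₀ (t₀ + T)) := by
    intro y z hyz t ht
    simp only [D]
    congr 1
    refine intervalIntegral.integral_congr fun s hs => ?_
    rw [uIcc_of_le ht.1] at hs
    simp only [hyz ⟨hs.1, hs.2.trans ht.2⟩]
  let x := hΦ.fixedPoint
  have hx : ∀ t ∈ Icc t₀ (t₀ + T), ext x t = D (ext x) t := by
    intro t ht
    have h : Φ x = x := hΦ.fixedPoint_isFixedPt
    have h1 := congrArg (fun g : X => (g ⟨t, ht⟩ : Y)) h
    exact (hext_mem x ⟨t, ht⟩).trans h1.symm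
  refine ⟨T, hT0, ext x, ⟨hext_cont x, ?_, ?_, hx⟩, ?_⟩
  · rw [hx t₀ ⟨le_rfl, hle⟩]
    simp [D, hS0]
  · exact (duhamel_continuousOn hA hγ1 hT' hT'_cont hT0.le hT1.le (hf_comp _ (hext_cont x))).1
  · rintro y ⟨hyc, -, -, hy⟩
    have hyb : ∀ t ∈ Icc t₀ (t₀ + T), ‖y t - x0‖ ≤ 1 := fun t ht =>
      (mem_ball_of_trap hyc (fun t ht hpast => by
        rw [hy t ht]
        exact (hDball y t ht hpast).trans_lt (by norm_num)) t ht).le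
    have hyext : EqOn (ext (toX y hyc hyb)) y (Icc t₀ (t₀ + T)) := fun t ht =>
      hext_mem (toX y hyc hyb) ⟨t, ht⟩
    have hfix : Φ (toX y hyc hyb) = toX y hyc hyb := by
      ext i
      exact (hDcongr _ _ hyext i.2).trans (hy i i.2).symm
    have hyx : toX y hyc hyb = x := hΦ.fixedPoint_unique hfix
    intro t ht
    rw [← hyx]
    exact (hyext ht).symm
end

section
/- Consider the non-autonomous linear problem z' = Lz + A(t)z, z(t₀) = z⁰, where A : [t₀, t₀ + T] → L(Y; W) is continuous. Then for every z⁰ ∈ Y there exists a unique continuous z : [t₀, t₀ + T] → Y satisfying z(t) = S_{t−t₀} z⁰ + ∫_{t₀}^t T_{t−s}(A(s) z(s)) ds for all t ∈ [t₀, t₀ + T]. Moreover, for each t ∈ [t₀, t₀ + T] the solution operator J(t, t₀) : Y → Y defined by J(t, t₀) z⁰ = z(t) is a bounded linear operator. -/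
open MeasureTheory Set

/-!
The mild equation is a linear Volterra equation of the second kind with a weakly singular kernel.
Substituting `z t = exp (lam * (t - t₀)) • u t` replaces `T' r` by `exp (-lam * r) • T' r`, whose
norm is dominated by `M₂ * exp ((κ₂ - lam) * r) * r ^ (-γ)`; since `γ < 1` this bound is integrable
on `(0, T)`, and its integral tends to `0` as `lam → ∞` by dominated convergence
(`exists_damping`). For `lam` large the Volterra operator `K` on `C([t₀, t₀ + T], Y)` therefore has
norm less than `1` (`IsSingularKernel.continuousOn_conv`, `IsSingularKernel.norm_conv_le`), so
`1 - K` is invertible. Existence, uniqueness, linearity and boundedness all follow at once from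
`u = (1 - K)⁻¹ (F z⁰)`, with `F z⁰` the damped free evolution
(`IsSingularKernel.exists_solution`).
-/

/-! ### Convolution with a weakly singular kernel -/

/-- A strongly continuous operator kernel `P` on `(0, ∞)` whose norm is dominated by a continuous
function `k` that is integrable on `(0, T)`, so that `P` may be singular at `0`. -/
structure IsSingularKernel {Y W : Type*} [NormedAddCommGroup Y] [NormedSpace ℝ Y]
    [NormedAddCommGroup W] [NormedSpace ℝ W] (P : ℝ → W →L[ℝ] Y) (k : ℝ → ℝ) (T : ℝ) : Prop where
  bound : ∀ r, 0 < r → ‖P r‖ ≤ k r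
  cont_bound : ContinuousOn k (Ioi 0)
  integrable_bound : IntervalIntegrable k volume 0 T
  cont : ∀ w, ContinuousOn (fun r => P r w) (Ioi 0)

namespace IsSingularKernel

variable {Y W : Type*} [NormedAddCommGroup Y] [NormedSpace ℝ Y]
  [NormedAddCommGroup W] [NormedSpace ℝ W] {P : ℝ → W →L[ℝ] Y} {k : ℝ → ℝ} {T : ℝ}

/-- Strong continuity and local boundedness give joint continuity. -/
lemma continuousOn_apply (h : IsSingularKernel P k T) {g : ℝ → W} (hg : Continuous g) :
    ContinuousOn (fun r => P r (g r)) (Ioi 0) := by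
  intro r₀ hr₀
  have h1 : Filter.Tendsto (fun r => P r (g r - g r₀)) (nhdsWithin r₀ (Ioi 0)) (nhds 0) := by
    have hk : Filter.Tendsto (fun r => k r * ‖g r - g r₀‖) (nhdsWithin r₀ (Ioi 0)) (nhds 0) := by
      have h2 : Filter.Tendsto (fun r => ‖g r - g r₀‖) (nhdsWithin r₀ (Ioi 0)) (nhds 0) := by
        have h3 : Continuous (fun r => ‖g r - g r₀‖) := by fun_prop
        simpa using (h3.tendsto r₀).mono_left nhdsWithin_le_nhds
      simpa using (h.cont_bound r₀ hr₀).tendsto.mul h2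
    refine squeeze_zero_norm' ?_ hk
    filter_upwards [self_mem_nhdsWithin] with r hr
    exact (P r).le_of_opNorm_le (h.bound r hr) _
  have h2 := h1.add (h.cont (g r₀) r₀ hr₀).tendsto
  simpa [ContinuousWithinAt] using h2

lemma nonneg (h : IsSingularKernel P k T) {r : ℝ} (hr : 0 < r) : 0 ≤ k r :=
  (norm_nonneg _).trans (h.bound r hr)

lemma norm_apply_le (h : IsSingularKernel P k T) {g : ℝ → W} {G : ℝ} (hG : ∀ r, ‖g r‖ ≤ G)
    {r : ℝ} (hr : 0 < r) (x : ℝ) : ‖P r (g x)‖ ≤ k r * G :=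
  (P r).le_of_opNorm_le_of_le (h.bound r hr) (hG x)

lemma integrableOn (h : IsSingularKernel P k T) {g : ℝ → W} (hg : Continuous g) {G : ℝ}
    (hG : ∀ r, ‖g r‖ ≤ G) (hT : 0 ≤ T) : IntegrableOn (fun r => P r (g r)) (Ioc 0 T) := by
  have hk : IntegrableOn (fun r => k r * G) (Ioc 0 T) :=
    ((intervalIntegrable_iff_integrableOn_Ioc_of_le hT).1 h.integrable_bound).mul_const G
  refine Integrable.mono' hk ?_ ?_
  · exact ((h.continuousOn_apply hg).mono (fun r hr => hr.1)).aestronglyMeasurable measurableSet_Ioc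
  · filter_upwards [ae_restrict_mem measurableSet_Ioc] with r hr
    exact h.norm_apply_le hG hr.1 r

lemma intervalIntegrable_conv (h : IsSingularKernel P k T) {g : ℝ → W} (hg : Continuous g) {G : ℝ}
    (hG : ∀ r, ‖g r‖ ≤ G) {t₀ t : ℝ} (ht : t ∈ Icc t₀ (t₀ + T)) :
    IntervalIntegrable (fun s => P (t - s) (g s)) volume t₀ t := by
  have hg' : Continuous (fun r => g (t - r)) := by fun_prop
  have h1 : IntervalIntegrable (fun r => P r (g (t - r))) volume (t - t₀) (t - t) := by
    rw [sub_self]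
    refine IntervalIntegrable.symm ?_
    rw [intervalIntegrable_iff_integrableOn_Ioc_of_le (by linarith [ht.1])]
    exact (h.integrableOn hg' (fun r => hG _) (by linarith [ht.1, ht.2])).mono_set
      (Ioc_subset_Ioc_right (by linarith [ht.2]))
  simpa using h1.comp_sub_left t

/-- In the variable `r = t - s` the convolution is an integral over the fixed interval `(0, T]`,
cut off at `t - t₀`. -/
lemma conv_eq (P : ℝ → W →L[ℝ] Y) (g : ℝ → W) {t₀ t : ℝ}
    (ht : t ∈ Icc t₀ (t₀ + T)) :
    ∫ s in t₀..t, P (t - s) (g s) =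
      ∫ r in Ioc 0 T, (Iic (t - t₀)).indicator (fun r => P r (g (t - r))) r := by
  have h1 := intervalIntegral.integral_comp_sub_left (a := t₀) (b := t)
    (fun r => P r (g (t - r))) t
  simp only [sub_sub_cancel, sub_self] at h1
  rw [h1, intervalIntegral.integral_of_le (by linarith [ht.1]),
    setIntegral_indicator measurableSet_Iic]
  congr 2
  ext r
  simp only [mem_Ioc, mem_inter_iff, mem_Iic]
  constructor
  · rintro ⟨a, b⟩
    exact ⟨⟨a, by linarith [ht.2]⟩, b⟩
  · rintro ⟨⟨a, b⟩, c⟩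
    exact ⟨a, c⟩

lemma norm_indicator_le (h : IsSingularKernel P k T) {g : ℝ → W} {G : ℝ}
    (hG : ∀ r, ‖g r‖ ≤ G) (t₀ t : ℝ) : ∀ᵐ r ∂(volume.restrict (Ioc 0 T)),
      ‖(Iic (t - t₀)).indicator (fun r => P r (g (t - r))) r‖ ≤ k r * G := by
  filter_upwards [ae_restrict_mem measurableSet_Ioc] with r hr
  exact (norm_indicator_le_norm_self _ _).trans (h.norm_apply_le hG hr.1 _)

lemma norm_conv_le (h : IsSingularKernel P k T) {g : ℝ → W} {G : ℝ}
    (hG : ∀ r, ‖g r‖ ≤ G) {t₀ t : ℝ} (ht : t ∈ Icc t₀ (t₀ + T)) :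
    ‖∫ s in t₀..t, P (t - s) (g s)‖ ≤ (∫ r in 0..T, k r) * G := by
  have hT : 0 ≤ T := by linarith [ht.1, ht.2]
  rw [conv_eq P g ht, intervalIntegral.integral_of_le hT, ← integral_mul_const]
  exact norm_integral_le_of_norm_le
    (((intervalIntegrable_iff_integrableOn_Ioc_of_le hT).1 h.integrable_bound).mul_const G)
    (h.norm_indicator_le hG t₀ t)

lemma continuousOn_conv (h : IsSingularKernel P k T) {g : ℝ → W} (hg : Continuous g) {G : ℝ}
    (hG : ∀ r, ‖g r‖ ≤ G) (hT : 0 ≤ T) (t₀ : ℝ) :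
    ContinuousOn (fun t => ∫ s in t₀..t, P (t - s) (g s)) (Icc t₀ (t₀ + T)) := by
  refine ContinuousOn.congr (f := fun t => ∫ r in Ioc 0 T,
    (Iic (t - t₀)).indicator (fun r => P r (g (t - r))) r) ?_ (fun t ht => conv_eq P g ht)
  refine Continuous.continuousOn (continuous_iff_continuousAt.2 fun t₁ => ?_)
  refine continuousAt_of_dominated (bound := fun r => k r * G) ?_ ?_ ?_ ?_
  · refine Filter.Eventually.of_forall fun t => ?_
    have hg' : Continuous (fun r => g (t - r)) := by fun_prop
    exact ((h.integrableOn hg' (fun r => hG _) hT).indicator measurableSet_Iic).aestronglyMeasurable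
  · exact Filter.Eventually.of_forall fun t => h.norm_indicator_le hG t₀ t
  · exact ((intervalIntegrable_iff_integrableOn_Ioc_of_le hT).1 h.integrable_bound).mul_const G
  · -- the cut-off jumps only at `r = t₁ - t₀`, a null set
    have hne : ∀ᵐ r ∂(volume.restrict (Ioc 0 T)), r ≠ t₁ - t₀ :=
      ae_restrict_of_ae (by simp [ae_iff])
    filter_upwards [hne] with r hr
    have hPg : Continuous (fun t => P r (g (t - r))) := by fun_prop
    rcases lt_or_gt_of_ne hr with hlt | hgt
    · refine hPg.continuousAt.congr ?_
      filter_upwards [lt_mem_nhds (show r + t₀ < t₁ by linarith)] with t ht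
      rw [indicator_of_mem (show r ∈ Iic (t - t₀) by simp only [mem_Iic]; linarith)]
    · refine (continuousAt_const (y := (0 : Y))).congr ?_
      filter_upwards [gt_mem_nhds (show t₁ < r + t₀ by linarith)] with t ht
      rw [indicator_of_notMem (show r ∉ Iic (t - t₀) by simp only [mem_Iic]; linarith)]

/-! ### Volterra equations with a small kernel -/

/-- If the kernel is small in `L¹`, the Volterra operator `v ↦ ∫ P (t - s) (A s (v s)) ds` on
`C([t₀, t₀ + T], Y)` has norm `< 1`; inverting `1 - K` by a Neumann series yields the solution
operator as a composition of bounded linear maps. -/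
theorem exists_solution [CompleteSpace Y] (h : IsSingularKernel P k T) (hT : 0 ≤ T) (t₀ : ℝ)
    {A : ℝ → Y →L[ℝ] W} (hA : Continuous A) {a : ℝ} (ha : ∀ s, ‖A s‖ ≤ a)
    (hsmall : (∫ r in 0..T, k r) * a < 1)
    {Q : ℝ → Y →L[ℝ] Y} (hQ : ∀ y, ContinuousOn (fun t => Q t y) (Icc t₀ (t₀ + T)))
    {q : ℝ} (hq : ∀ t ∈ Icc t₀ (t₀ + T), ‖Q t‖ ≤ q) :
    ∃ R : ℝ → Y →L[ℝ] Y, ∀ z0 : Y,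
      (Continuous (fun t => R t z0) ∧
        (∀ t ∈ Icc t₀ (t₀ + T),
          IntervalIntegrable (fun s => P (t - s) (A s (R s z0))) volume t₀ t) ∧
        ∀ t ∈ Icc t₀ (t₀ + T),
          R t z0 = Q t z0 + ∫ s in t₀..t, P (t - s) (A s (R s z0))) ∧
      ∀ z : ℝ → Y, ContinuousOn z (Icc t₀ (t₀ + T)) →
        (∀ t ∈ Icc t₀ (t₀ + T), z t = Q t z0 + ∫ s in t₀..t, P (t - s) (A s (z s))) →
        EqOn z (fun t => R t z0) (Icc t₀ (t₀ + T)) := by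
  have hle : t₀ ≤ t₀ + T := by linarith
  have ha0 : 0 ≤ a := (norm_nonneg _).trans (ha 0)
  have hk0 : 0 ≤ ∫ r in 0..T, k r := by
    rw [intervalIntegral.integral_of_le hT]
    exact setIntegral_nonneg measurableSet_Ioc fun r hr => h.nonneg hr.1
  have hq0 : 0 ≤ q := (norm_nonneg _).trans (hq t₀ (left_mem_Icc.2 hle))
  let I := Icc t₀ (t₀ + T)
  let pr : ℝ → I := projIcc t₀ (t₀ + T) hle
  have hpr : Continuous pr := continuous_projIcc
  have hprv : ∀ (t : ℝ) (ht : t ∈ Icc t₀ (t₀ + T)), pr t = ⟨t, ht⟩ :=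
    fun t ht => projIcc_of_mem hle ht
  have hgc : ∀ v : C(I, Y), Continuous (fun s => A s (v (pr s))) := fun v =>
    hA.clm_apply (v.continuous.comp hpr)
  have hgb : ∀ (v : C(I, Y)) (s : ℝ), ‖A s (v (pr s))‖ ≤ a * ‖v‖ := fun v s =>
    (A s).le_of_opNorm_le_of_le (ha s) (v.norm_coe_le_norm _)
  let K₀ : C(I, Y) →ₗ[ℝ] C(I, Y) :=
    { toFun := fun v => ⟨fun t => ∫ s in t₀..t, P (t - s) (A s (v (pr s))),
        (h.continuousOn_conv (hgc v) (hgb v) hT t₀).domRestrict⟩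
      map_add' := by
        intro v w
        ext t
        simp only [ContinuousMap.add_apply, map_add, ContinuousMap.coe_mk]
        exact intervalIntegral.integral_add (h.intervalIntegrable_conv (hgc v) (hgb v) t.2)
          (h.intervalIntegrable_conv (hgc w) (hgb w) t.2)
      map_smul' := by
        intro c v
        ext t
        simp only [ContinuousMap.smul_apply, map_smul, ContinuousMap.coe_mk, RingHom.id_apply]
        exact intervalIntegral.integral_smul c _ }
  let K : C(I, Y) →L[ℝ] C(I, Y) := K₀.mkContinuous ((∫ r in 0..T, k r) * a) (by
    intro v
    rw [ContinuousMap.norm_le _ (by positivity)]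
    intro t
    rw [mul_assoc]
    exact h.norm_conv_le (hgb v) t.2)
  have hK : ‖K‖ < 1 :=
    (LinearMap.mkContinuous_norm_le _ (by positivity) _).trans_lt hsmall
  have hKapp : ∀ (v : C(I, Y)) (t : I), K v t = ∫ s in t₀..t, P (t - s) (A s (v (pr s))) :=
    fun v t => rfl
  let F₀ : Y →ₗ[ℝ] C(I, Y) :=
    { toFun := fun y => ⟨fun t => Q t y, (hQ y).domRestrict⟩
      map_add' := by intro v w; ext t; exact map_add (Q t) v w
      map_smul' := by intro c v; ext t; exact map_smul (Q t) c v }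
  let F : Y →L[ℝ] C(I, Y) := F₀.mkContinuous q (by
    intro y
    rw [ContinuousMap.norm_le _ (by positivity)]
    intro t
    exact (Q t).le_of_opNorm_le (hq t t.2) y)
  have hFapp : ∀ (y : Y) (t : I), F y t = Q t y := fun y t => rfl
  let U : (C(I, Y) →L[ℝ] C(I, Y))ˣ := Units.oneSub K hK
  have hU : (U : C(I, Y) →L[ℝ] C(I, Y)) = 1 - K := Units.val_oneSub K hK
  let R₀ : Y →L[ℝ] C(I, Y) := (↑U⁻¹ : C(I, Y) →L[ℝ] C(I, Y)).comp F
  have hR₀ : ∀ y, R₀ y = F y + K (R₀ y) := by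
    intro y
    have h1 : ((U : C(I, Y) →L[ℝ] C(I, Y)) * (↑U⁻¹ : C(I, Y) →L[ℝ] C(I, Y))) (F y) = F y := by
      rw [Units.mul_inv]; rfl
    rw [hU] at h1
    have h2 : R₀ y - K (R₀ y) = F y := h1
    exact sub_eq_iff_eq_add.1 h2
  have huniq : ∀ y v, v = F y + K v → v = R₀ y := by
    intro y v hv
    have h1 : ((↑U⁻¹ : C(I, Y) →L[ℝ] C(I, Y)) * (U : C(I, Y) →L[ℝ] C(I, Y))) v = v := by
      rw [Units.inv_mul]; rfl
    have h2 : (U : C(I, Y) →L[ℝ] C(I, Y)) v = F y := by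
      rw [hU]
      exact sub_eq_iff_eq_add.2 hv
    calc v = (↑U⁻¹ : C(I, Y) →L[ℝ] C(I, Y)) ((U : C(I, Y) →L[ℝ] C(I, Y)) v) := h1.symm
      _ = R₀ y := by rw [h2]; rfl
  refine ⟨fun t => (ContinuousMap.evalCLM ℝ (pr t)).comp R₀, fun z0 => ⟨⟨?_, ?_, ?_⟩, ?_⟩⟩
  · exact (R₀ z0).continuous.comp hpr
  · intro t ht
    exact h.intervalIntegrable_conv (hgc (R₀ z0)) (hgb _) ht
  · intro t ht
    have h1 := congrArg (fun v : C(I, Y) => v ⟨t, ht⟩) (hR₀ z0)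
    simp only [ContinuousMap.add_apply, hKapp, hFapp] at h1
    rw [← hprv t ht] at h1
    exact h1
  · intro z hz heq t ht
    let v : C(I, Y) := ⟨fun t => z t, hz.domRestrict⟩
    have hv : v = F z0 + K v := by
      ext τ
      rw [ContinuousMap.add_apply, hKapp, hFapp]
      refine (heq τ τ.2).trans ?_
      congr 1
      refine intervalIntegral.integral_congr fun s hs => ?_
      rw [uIcc_of_le τ.2.1] at hs
      have hs' : s ∈ Icc t₀ (t₀ + T) := ⟨hs.1, hs.2.trans τ.2.2⟩
      simp only [hprv s hs']
      rfl
    have h1 := congrArg (fun v : C(I, Y) => v ⟨t, ht⟩) (huniq z0 v hv)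
    rw [← hprv t ht] at h1
    change z (pr t) = R₀ z0 (pr t) at h1
    rw [hprv t ht] at h1
    change z t = R₀ z0 (pr t)
    rw [hprv t ht]
    exact h1

end IsSingularKernel

/-! ### Damping and the solution operator -/

/-- The `L¹` norm of the singular bound becomes arbitrarily small after damping by
`exp (-lam * r)`. -/
lemma exists_damping (M κ γ T a : ℝ) (hT : 0 ≤ T) (hγ : γ < 1) :
    ∃ lam : ℝ, (∫ r in 0..T, M * Real.exp ((κ - lam) * r) * r ^ (-γ)) * a < 1 := by
  have hint : IntervalIntegrable (fun r : ℝ => |M| * Real.exp (|κ| * T) * r ^ (-γ)) volume 0 T :=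
    (intervalIntegral.intervalIntegrable_rpow' (by linarith)).const_mul _
  have hlim : Filter.Tendsto
      (fun lam : ℝ => ∫ r in 0..T, M * Real.exp ((κ - lam) * r) * r ^ (-γ))
      Filter.atTop (nhds (∫ r in 0..T, (0 : ℝ))) := by
    refine intervalIntegral.tendsto_integral_filter_of_dominated_convergence
      (fun r : ℝ => |M| * Real.exp (|κ| * T) * r ^ (-γ)) ?_ ?_ hint ?_
    · refine Filter.Eventually.of_forall fun lam => Measurable.aestronglyMeasurable ?_
      fun_prop
    · filter_upwards [Filter.eventually_ge_atTop 0] with lam hlam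
      refine Filter.Eventually.of_forall fun r hr => ?_
      rw [uIoc_of_le hT] at hr
      have hr0 : (0 : ℝ) ≤ r ^ (-γ) := Real.rpow_nonneg hr.1.le _
      rw [norm_mul, norm_mul, Real.norm_eq_abs, Real.norm_eq_abs, Real.norm_eq_abs, Real.abs_exp,
        abs_of_nonneg hr0]
      refine mul_le_mul_of_nonneg_right (mul_le_mul_of_nonneg_left (Real.exp_le_exp.2 ?_)
        (abs_nonneg _)) hr0
      calc (κ - lam) * r ≤ |κ| * r := by
            have := le_abs_self κ
            exact mul_le_mul_of_nonneg_right (by linarith) hr.1.le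
        _ ≤ |κ| * T := mul_le_mul_of_nonneg_left hr.2 (abs_nonneg _)
    · refine Filter.Eventually.of_forall fun r hr => ?_
      rw [uIoc_of_le hT] at hr
      have h1 : Filter.Tendsto (fun lam : ℝ => (κ - lam) * r) Filter.atTop Filter.atBot :=
        by
        have h0 : Filter.Tendsto (fun lam : ℝ => κ - lam) Filter.atTop Filter.atBot := by
          simpa [sub_eq_add_neg] using
            Filter.tendsto_atBot_add_const_left _ κ Filter.tendsto_neg_atTop_atBot
        exact h0.atBot_mul_const hr.1
      have h2 := ((Real.tendsto_exp_atBot.comp h1).const_mul M).mul_const (r ^ (-γ))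
      simpa using h2
  have h3 := hlim.mul_const a
  simp only [intervalIntegral.integral_zero, zero_mul] at h3
  exact (h3.eventually (gt_mem_nhds one_pos)).exists

/-- Consider the non-autonomous linear problem
`z' = Lz + A(t)z`, `z(t₀) = z⁰`, where `A : [t₀, t₀+T] → L(Y;W)` is continuous.  Then for
every `z⁰ ∈ Y` there exists a unique continuous `z : [t₀, t₀+T] → Y` satisfying
`z t = S (t−t₀) z⁰ + ∫_{t₀}^t T' (t−s) (A s (z s)) ds` on `[t₀, t₀+T]`; moreover, for each
`t ∈ [t₀, t₀+T]` the solution operator `J(t,t₀) : z⁰ ↦ z(t)` is a bounded linear operator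
on `Y` (here realized as a family `Jop : ℝ → (Y →L[ℝ] Y)`). -/
theorem linear_nonautonomous_solution_operator
    {Y W : Type*} [NormedAddCommGroup Y] [NormedSpace ℝ Y] [CompleteSpace Y]
    [NormedAddCommGroup W] [NormedSpace ℝ W] [CompleteSpace W]
    (J : Y →L[ℝ] W) (hJ : Function.Injective J)
    (S : ℝ → Y →L[ℝ] Y)
    (hS0 : S 0 = ContinuousLinearMap.id ℝ Y)
    (hS_semigroup : ∀ s t : ℝ, 0 ≤ s → 0 ≤ t → S (t + s) = (S t).comp (S s))
    (hS_cont : ∀ y : Y, ContinuousOn (fun t => S t y) (Set.Ici (0 : ℝ)))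
    (M₁ κ₁ : ℝ) (hM₁ : 0 < M₁) (hκ₁ : 0 < κ₁)
    (hS_bound : ∀ t : ℝ, 0 ≤ t → ‖S t‖ ≤ M₁ * Real.exp (κ₁ * t))
    (T' : ℝ → W →L[ℝ] Y)
    (hT'J : ∀ t : ℝ, 0 < t → (T' t).comp J = S t)
    (hT'S : ∀ s t : ℝ, 0 < s → 0 < t → T' (t + s) = (S t).comp (T' s))
    (M₂ κ₂ γ : ℝ) (hM₂ : 0 < M₂) (hκ₂ : 0 < κ₂) (hγ0 : 0 ≤ γ) (hγ1 : γ < 1)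
    (hT'_bound : ∀ t : ℝ, 0 < t → ‖T' t‖ ≤ M₂ * Real.exp (κ₂ * t) * t ^ (-γ))
    (hT'_cont : ∀ w : W, ContinuousOn (fun t => T' t w) (Set.Ioi (0 : ℝ)))
    (t₀ T : ℝ) (hT : 0 < T)
    (A : ℝ → Y →L[ℝ] W)
    (hA : ContinuousOn A (Set.Icc t₀ (t₀ + T))) :
    ∃ Jop : ℝ → Y →L[ℝ] Y, ∀ z0 : Y,
      (ContinuousOn (fun t => Jop t z0) (Set.Icc t₀ (t₀ + T)) ∧
        (∀ t ∈ Set.Icc t₀ (t₀ + T),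
          IntervalIntegrable (fun s => T' (t - s) (A s (Jop s z0)))
            MeasureTheory.volume t₀ t) ∧
        ∀ t ∈ Set.Icc t₀ (t₀ + T),
          Jop t z0 = S (t - t₀) z0 + ∫ s in t₀..t, T' (t - s) (A s (Jop s z0))) ∧
      ∀ z : ℝ → Y,
        ContinuousOn z (Set.Icc t₀ (t₀ + T)) →
        (∀ t ∈ Set.Icc t₀ (t₀ + T),
          IntervalIntegrable (fun s => T' (t - s) (A s (z s))) MeasureTheory.volume t₀ t) →
        (∀ t ∈ Set.Icc t₀ (t₀ + T),
          z t = S (t - t₀) z0 + ∫ s in t₀..t, T' (t - s) (A s (z s))) →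
        Set.EqOn z (fun t => Jop t z0) (Set.Icc t₀ (t₀ + T)) := by
  have hle : t₀ ≤ t₀ + T := by linarith
  obtain ⟨a, ha⟩ := isCompact_Icc.exists_bound_of_continuousOn hA
  obtain ⟨lam, hlam⟩ := exists_damping M₂ κ₂ γ T a hT.le hγ1
  have hker : IsSingularKernel (fun r => Real.exp (-lam * r) • T' r)
      (fun r => M₂ * Real.exp ((κ₂ - lam) * r) * r ^ (-γ)) T := by
    refine ⟨fun r hr => ?_, ?_, ?_, fun w => ?_⟩
    · rw [norm_smul, Real.norm_eq_abs, Real.abs_exp]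
      calc Real.exp (-lam * r) * ‖T' r‖
          ≤ Real.exp (-lam * r) * (M₂ * Real.exp (κ₂ * r) * r ^ (-γ)) :=
            mul_le_mul_of_nonneg_left (hT'_bound r hr) (Real.exp_pos _).le
        _ = M₂ * Real.exp ((κ₂ - lam) * r) * r ^ (-γ) := by
            rw [show (κ₂ - lam) * r = -lam * r + κ₂ * r by ring, Real.exp_add]
            ring
    · exact ContinuousOn.mul (by fun_prop)
        (continuousOn_id.rpow_const fun r hr => Or.inl (ne_of_gt hr))
    · exact (intervalIntegral.intervalIntegrable_rpow' (by linarith)).continuousOn_mul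
        (by fun_prop)
    · exact ContinuousOn.smul (by fun_prop) (hT'_cont w)
  have hA' : Continuous (fun s => A (projIcc t₀ (t₀ + T) hle s)) :=
    hA.domRestrict.comp continuous_projIcc
  have hA'_eq : ∀ s ∈ Icc t₀ (t₀ + T), A (projIcc t₀ (t₀ + T) hle s) = A s := by
    intro s hs
    rw [projIcc_of_mem hle hs]
  have hQ : ∀ y, ContinuousOn
      (fun t => (Real.exp (-lam * (t - t₀)) • S (t - t₀)) y) (Icc t₀ (t₀ + T)) := by
    intro y
    refine ContinuousOn.smul (by fun_prop) ?_
    exact (hS_cont y).comp (by fun_prop) fun t ht => sub_nonneg.2 ht.1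
  have hq : ∀ t ∈ Icc t₀ (t₀ + T), ‖Real.exp (-lam * (t - t₀)) • S (t - t₀)‖ ≤
      Real.exp (|lam| * T) * (M₁ * Real.exp (κ₁ * T)) := by
    intro t ht
    have h0 : 0 ≤ t - t₀ := sub_nonneg.2 ht.1
    have h1 : t - t₀ ≤ T := by linarith [ht.2]
    rw [norm_smul, Real.norm_eq_abs, Real.abs_exp]
    refine mul_le_mul (Real.exp_le_exp.2 ?_) ((hS_bound _ h0).trans ?_) (norm_nonneg _)
      (Real.exp_pos _).le
    · exact mul_le_mul (neg_le_abs lam) h1 h0 (abs_nonneg _)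
    · gcongr
  obtain ⟨R, hR⟩ := hker.exists_solution hT.le t₀ hA'
    (fun s => ha _ (projIcc t₀ (t₀ + T) hle s).2) hlam hQ hq
  -- the rescaling `u s = exp (-lam * (s - t₀)) • z s` turns `T'` into the damped kernel
  have key : ∀ (u z : ℝ → Y) (t : ℝ), t ∈ Icc t₀ (t₀ + T) →
      (∀ s, z s = Real.exp (lam * (s - t₀)) • u s) → ∀ s ∈ Icc t₀ t,
      Real.exp (lam * (t - t₀)) • (Real.exp (-lam * (t - s)) • T' (t - s))
        (A (projIcc t₀ (t₀ + T) hle s) (u s)) = T' (t - s) (A s (z s)) := by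
    intro u z t ht hz s hs
    rw [hA'_eq s ⟨hs.1, hs.2.trans ht.2⟩, hz s, smul_apply, map_smul, map_smul,
      smul_smul, ← Real.exp_add]
    congr 2
    ring
  have keyI : ∀ (u z : ℝ → Y) (t : ℝ), t ∈ Icc t₀ (t₀ + T) →
      (∀ s, z s = Real.exp (lam * (s - t₀)) • u s) →
      Real.exp (lam * (t - t₀)) • ∫ s in t₀..t, (Real.exp (-lam * (t - s)) • T' (t - s))
        (A (projIcc t₀ (t₀ + T) hle s) (u s)) = ∫ s in t₀..t, T' (t - s) (A s (z s)) := by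
    intro u z t ht hz
    rw [← intervalIntegral.integral_smul]
    refine intervalIntegral.integral_congr fun s hs => ?_
    rw [uIcc_of_le ht.1] at hs
    exact key u z t ht hz s hs
  have hexp : ∀ t (y : Y), Real.exp (lam * (t - t₀)) • Real.exp (-lam * (t - t₀)) • y = y := by
    intro t y
    rw [smul_smul, ← Real.exp_add]
    simp
  have hexp' : ∀ t (y : Y), Real.exp (-lam * (t - t₀)) • Real.exp (lam * (t - t₀)) • y = y := by
    intro t y
    rw [smul_smul, ← Real.exp_add]
    simp
  refine ⟨fun t => Real.exp (lam * (t - t₀)) • R t, fun z0 => ?_⟩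
  obtain ⟨⟨hRc, hRi, hRe⟩, hRu⟩ := hR z0
  refine ⟨⟨?_, ?_, ?_⟩, ?_⟩
  · exact (Continuous.smul (by fun_prop) hRc).continuousOn
  · intro t ht
    refine ((hRi t ht).smul (Real.exp (lam * (t - t₀)))).congr fun s hs => ?_
    rw [uIoc_of_le ht.1] at hs
    exact key (fun s => R s z0) _ t ht (fun s => rfl) s ⟨hs.1.le, hs.2⟩
  · intro t ht
    rw [← keyI (fun s => R s z0) (fun s => (Real.exp (lam * (s - t₀)) • R s) z0) t ht
      (fun s => rfl), smul_apply]
    nth_rewrite 1 [hRe t ht]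
    rw [smul_add, smul_apply, hexp]
  · intro z hz _ heq t ht
    have h1 := hRu (fun s => Real.exp (-lam * (s - t₀)) • z s)
      (ContinuousOn.smul (by fun_prop) hz) (fun t ht => ?_) ht
    · change z t = Real.exp (lam * (t - t₀)) • R t z0
      rw [← hexp t (z t)]
      exact congrArg _ h1
    · nth_rewrite 1 [heq t ht]
      rw [← keyI (fun s => Real.exp (-lam * (s - t₀)) • z s) z t ht (fun s => (hexp s _).symm),
        smul_add, hexp', smul_apply]
end

section
/- In the abstract semilinear setting, assume additionally that for every t the map f(t,·) : Y → W is Fréchet differentiable with derivative Df(t,x) ∈ L(Y;W), that Df : ℝ × Y → L(Y;W) is continuous, and that for every R > 0 there exist C₂(R) > 0 and λ₂(R) > 0 such that sup_{t∈ℝ} ‖f(t, x + h) − f(t, x) − Df(t,x)h‖_W ≤ C₂(R)‖h‖_Y² whenever ‖x‖_Y ≤ R and ‖h‖_Y ≤ λ₂(R), and sup_{t∈ℝ} ‖Df(t,x)‖_{L(Y;W)} ≤ C₂(R) whenever ‖x‖_Y ≤ R. Then for every R, T > 0 there exist constants C₃(R,T) > 0 and λ₃(R,T) > 0 with the following property.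 Whenever x : [t₀, t₀ + T] → Y is a mild solution with ‖x(t)‖_Y ≤ R for all t ∈ [t₀, t₀ + T], then: (i) for every h⁰ ∈ Y there exists a unique continuous h : [t₀, t₀ + T] → Y with h(t) = S_{t−t₀} h⁰ + ∫_{t₀}^t T_{t−s}(Df(s, x(s)) h(s)) ds for all t; (ii) for each t, the map V(t) : h⁰ ↦ h(t) is a bounded linear operator on Y with ‖V(t)‖_{L(Y)} ≤ C₃(R,T); (iii) for every h⁰ ∈ Y with ‖h⁰‖_Y ≤ λ₃(R,T), the mild solution y on [t₀, t₀ + T] with y(t₀) = x(t₀) + h⁰ exists and satisfies ‖y(t) − x(t) − V(t)h⁰‖_Y ≤ C₃(R,T)‖h⁰‖_Y² for every t ∈ [t₀, t₀ + T]; in particular, for each t the map x⁰ ↦ (value at t of the mild solution starting at x⁰) is Fréchet differentiable at x(t₀) with derivative V(t). -/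
/-!
All three assertions concern Duhamel equations `z(t) = p(t) + ∫ T'(t-s) F(s, z(s)) ds` whose kernel
is dominated by `k(r) = M₂ exp(κ₂ r) r^(-γ)`, which is integrable near `0` because `γ < 1`. In the
norm `sup exp(-μ(t-t₀)) ‖z(t)‖` the Duhamel operator has norm at most
`q = ∫₀ᵀ k(r) exp(-μ r) dr`, and `q L ≤ 1/2` for `μ` large (`exists_weight`). This gives a Gronwall
bound (`duhamel_gronwall`) and a contraction-mapping existence result (`duhamel_exists`) on all of
`[t₀, t₀ + T]`, with constants independent of `t₀` and `x`.

Existence applied to `F(s, z) = Df(s, x(s)) z` produces the variational solution, and the Gronwall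
bound its uniqueness, hence its linearity in the initial datum. Existence applied to
`F(s, z) = f(s, x(s) + z) - f(s, x(s))`, Lipschitz on the unit ball, produces `y = x + z` with
`‖z‖ ≤ A ‖h⁰‖`. Finally `w = z - V h⁰` solves the linear equation with zero initial datum and a
forcing bounded by `C₂ ‖z‖²`, so the Gronwall bound gives the quadratic estimate.
-/

open MeasureTheory Set

/-! ### Duhamel integrals with a weakly singular kernel -/

section DuhamelKernel

variable {Y W : Type*} [NormedAddCommGroup Y] [NormedSpace ℝ Y]
  [NormedAddCommGroup W] [NormedSpace ℝ W]

/-- The exponential weight: by dominated convergence `∫₀ᵀ k(r) exp (-μ r) dr → 0` as `μ → ∞`, so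
a kernel with Lipschitz factor `L` becomes a `1/2`-contraction for large `μ`. -/
lemma exists_weight {k : ℝ → ℝ} {T : ℝ} (hk : IntegrableOn k (Ioc 0 T)) (L : ℝ) :
    ∃ μ : ℝ, 0 ≤ μ ∧ (∫ r in Ioc 0 T, k r * Real.exp (-(μ * r))) * L ≤ 1 / 2 := by
  have key : Filter.Tendsto (fun n : ℕ => ∫ r in Ioc 0 T, k r * Real.exp (-((n : ℝ) * r)))
      Filter.atTop (nhds (∫ _r in Ioc 0 T, (0 : ℝ))) := by
    refine tendsto_integral_of_dominated_convergence (fun r => ‖k r‖) ?_ hk.norm ?_ ?_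
    · intro n
      exact hk.aestronglyMeasurable.mul (by fun_prop)
    · intro n
      filter_upwards [ae_restrict_mem measurableSet_Ioc] with r hr
      rw [norm_mul, Real.norm_eq_abs (Real.exp _), Real.abs_exp]
      refine mul_le_of_le_one_right (norm_nonneg _) (Real.exp_le_one_iff.2 ?_)
      have := mul_nonneg (Nat.cast_nonneg (α := ℝ) n) hr.1.le
      linarith
    · filter_upwards [ae_restrict_mem measurableSet_Ioc] with r hr
      have h1 : Filter.Tendsto (fun n : ℕ => (n : ℝ) * r) Filter.atTop Filter.atTop :=
        tendsto_natCast_atTop_atTop.atTop_mul_const hr.1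
      simpa using (Real.tendsto_exp_neg_atTop_nhds_zero.comp h1).const_mul (k r)
  have key2 := key.mul_const L
  simp only [integral_zero, zero_mul] at key2
  obtain ⟨n, hn⟩ := (key2.eventually (ge_mem_nhds (by norm_num : (0 : ℝ) < 1 / 2))).exists
  exact ⟨n, Nat.cast_nonneg n, hn⟩

/-- Strong continuity and a locally bounded norm make `(r, w) ↦ T' r w` jointly continuous along
continuous curves. -/
lemma continuousOn_family_apply {T' : ℝ → W →L[ℝ] Y} {k : ℝ → ℝ}
    (hkc : ContinuousOn k (Ioi 0)) (hTk : ∀ r, 0 < r → ‖T' r‖ ≤ k r)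
    (hTc : ∀ w : W, ContinuousOn (fun r => T' r w) (Ioi 0))
    {w : ℝ → W} (hw : Continuous w) :
    ContinuousOn (fun r => T' r (w r)) (Ioi 0) := by
  intro r₀ hr₀
  have h1 : Filter.Tendsto (fun r => T' r (w r - w r₀)) (nhdsWithin r₀ (Ioi 0)) (nhds 0) := by
    have h2 : Filter.Tendsto (fun r => k r * ‖w r - w r₀‖) (nhdsWithin r₀ (Ioi 0)) (nhds 0) := by
      have h3 : ContinuousWithinAt (fun r => k r * ‖w r - w r₀‖) (Ioi 0) r₀ :=
        (hkc r₀ hr₀).mul (by fun_prop)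
      simpa [ContinuousWithinAt] using h3
    refine squeeze_zero_norm' ?_ h2
    filter_upwards [self_mem_nhdsWithin] with r hr
    exact (T' r).le_of_opNorm_le (hTk r hr) _
  have h4 := h1.add (hTc (w r₀) r₀ hr₀)
  simpa [ContinuousWithinAt] using h4

lemma integrableOn_family_apply {T' : ℝ → W →L[ℝ] Y} {k : ℝ → ℝ} {T : ℝ}
    (hkc : ContinuousOn k (Ioi 0)) (hki : IntegrableOn k (Ioc 0 T))
    (hTk : ∀ r, 0 < r → ‖T' r‖ ≤ k r)
    (hTc : ∀ w : W, ContinuousOn (fun r => T' r w) (Ioi 0))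
    {w : ℝ → W} (hw : Continuous w) {B : ℝ} (hB : ∀ r, ‖w r‖ ≤ B) :
    IntegrableOn (fun r => T' r (w r)) (Ioc 0 T) := by
  refine Integrable.mono' (hki.mul_const B) ?_ ?_
  · exact ((continuousOn_family_apply hkc hTk hTc hw).mono
      (fun r hr => hr.1)).aestronglyMeasurable measurableSet_Ioc
  · filter_upwards [ae_restrict_mem measurableSet_Ioc] with r hr
    exact (T' r).le_of_opNorm_le_of_le (hTk r hr.1) (hB r)

lemma exists_bounded_extension {E : Type*} [NormedAddCommGroup E] {φ : ℝ → E} {a b : ℝ}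
    (hab : a ≤ b) (hφ : ContinuousOn φ (Icc a b)) :
    ∃ ψ : ℝ → E, Continuous ψ ∧ EqOn ψ φ (Icc a b) ∧ ∃ B, ∀ s, ‖ψ s‖ ≤ B := by
  refine ⟨IccExtend hab ((Icc a b).domRestrict φ), ?_, ?_, ?_⟩
  · exact (continuousOn_iff_continuous_domRestrict.1 hφ).Icc_extend'
  · intro s hs
    rw [IccExtend_of_mem hab _ hs]
    rfl
  · obtain ⟨B, hB⟩ := isCompact_Icc.exists_bound_of_continuousOn hφ
    exact ⟨B, fun s => hB _ (projIcc a b hab s).2⟩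

lemma duhamel_intervalIntegrable {T' : ℝ → W →L[ℝ] Y} {k : ℝ → ℝ} {T t₀ : ℝ}
    (hkc : ContinuousOn k (Ioi 0)) (hki : IntegrableOn k (Ioc 0 T))
    (hTk : ∀ r, 0 < r → ‖T' r‖ ≤ k r)
    (hTc : ∀ w : W, ContinuousOn (fun r => T' r w) (Ioi 0))
    {φ : ℝ → W} (hφ : ContinuousOn φ (Icc t₀ (t₀ + T))) {t : ℝ} (ht : t ∈ Icc t₀ (t₀ + T)) :
    IntervalIntegrable (fun s => T' (t - s) (φ s)) volume t₀ t := by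
  obtain ⟨ψ, hψ, hψφ, B, hB⟩ := exists_bounded_extension (ht.1.trans ht.2) hφ
  have h1 : IntegrableOn (fun r => T' r (ψ (t - r))) (Ioc 0 (t - t₀)) :=
    (integrableOn_family_apply hkc hki hTk hTc (hψ.comp (by fun_prop : Continuous fun r => t - r))
      (fun r => hB _)).mono_set (Ioc_subset_Ioc_right (by linarith [ht.2]))
  have h2 : IntervalIntegrable (fun r => T' r (ψ (t - r))) volume 0 (t - t₀) :=
    (intervalIntegrable_iff_integrableOn_Ioc_of_le (by linarith [ht.1])).2 h1
  have h3 := (h2.comp_sub_left t).symm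
  simp only [sub_sub_cancel, sub_zero] at h3
  refine h3.congr ?_
  intro s hs
  rw [uIoc_of_le ht.1] at hs
  simp only
  rw [hψφ ⟨hs.1.le, hs.2.trans ht.2⟩]

/-- A Duhamel integral depends continuously on its upper limit. After `r = t - s` it is an integral
over the fixed interval `(0, T]`, dominated by a multiple of `k`. -/
lemma duhamel_continuousOn_s5 {T' : ℝ → W →L[ℝ] Y} {k : ℝ → ℝ} {T t₀ : ℝ} (hT : 0 ≤ T)
    (hkc : ContinuousOn k (Ioi 0)) (hki : IntegrableOn k (Ioc 0 T))
    (hTk : ∀ r, 0 < r → ‖T' r‖ ≤ k r)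
    (hTc : ∀ w : W, ContinuousOn (fun r => T' r w) (Ioi 0))
    {φ : ℝ → W} (hφ : ContinuousOn φ (Icc t₀ (t₀ + T))) :
    ContinuousOn (fun t => ∫ s in t₀..t, T' (t - s) (φ s)) (Icc t₀ (t₀ + T)) := by
  obtain ⟨ψ, hψ, hψφ, B, hB⟩ := exists_bounded_extension (by linarith : t₀ ≤ t₀ + T) hφ
  have hrep : ∀ t ∈ Icc t₀ (t₀ + T), ∫ s in t₀..t, T' (t - s) (φ s) =
      ∫ r in Ioc 0 T, (Iic (t - t₀)).indicator (fun r => T' r (ψ (t - r))) r := by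
    intro t ht
    have h1 : ∫ s in t₀..t, T' (t - s) (φ s) = ∫ s in t₀..t, T' (t - s) (ψ (t - (t - s))) := by
      refine intervalIntegral.integral_congr ?_
      intro s hs
      rw [uIcc_of_le ht.1] at hs
      simp only [sub_sub_cancel]
      rw [hψφ ⟨hs.1, hs.2.trans ht.2⟩]
    rw [h1, intervalIntegral.integral_comp_sub_left (fun r => T' r (ψ (t - r))) t, sub_self,
      intervalIntegral.integral_of_le (by linarith [ht.1]), setIntegral_indicator measurableSet_Iic]
    congr 2
    ext r
    simp only [mem_Ioc, mem_inter_iff, mem_Iic]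
    constructor
    · rintro ⟨h, h'⟩
      exact ⟨⟨h, by linarith [ht.2]⟩, h'⟩
    · rintro ⟨⟨h, -⟩, h'⟩
      exact ⟨h, h'⟩
  refine ContinuousOn.congr ?_ hrep
  intro t _
  refine ContinuousAt.continuousWithinAt ?_
  have hmeas : ∀ t, AEStronglyMeasurable (fun r => T' r (ψ (t - r))) (volume.restrict (Ioc 0 T)) :=
    fun t => (integrableOn_family_apply hkc hki hTk hTc
      (hψ.comp (by fun_prop : Continuous fun r => t - r)) (fun r => hB _)).aestronglyMeasurable
  refine continuousAt_of_dominated (bound := fun r => k r * B) ?_ ?_ (hki.mul_const B) ?_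
  · exact Filter.Eventually.of_forall fun t => (hmeas t).indicator measurableSet_Iic
  · refine Filter.Eventually.of_forall fun t => ?_
    filter_upwards [ae_restrict_mem measurableSet_Ioc] with r hr
    exact (norm_indicator_le_norm_self _ _).trans
      ((T' r).le_of_opNorm_le_of_le (hTk r hr.1) (hB _))
  · -- The integrand jumps in `t` only at `r = t - t₀`, a null set of `r`.
    have hne : ∀ᵐ r ∂(volume.restrict (Ioc 0 T)), r ≠ t - t₀ :=
      ae_restrict_of_ae (Measure.ae_ne volume (t - t₀))
    filter_upwards [hne] with r hr
    have hc : Continuous fun t' => T' r (ψ (t' - r)) := (T' r).continuous.comp (by fun_prop)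
    rcases lt_or_gt_of_ne hr with h | h
    · refine hc.continuousAt.congr ?_
      have : ∀ᶠ t' in nhds t, r + t₀ < t' := lt_mem_nhds (by linarith)
      filter_upwards [this] with t' ht'
      rw [indicator_of_mem]
      simp only [mem_Iic]
      linarith
    · refine (continuousAt_const (y := (0 : Y))).congr ?_
      have : ∀ᶠ t' in nhds t, t' < r + t₀ := gt_mem_nhds (by linarith)
      filter_upwards [this] with t' ht'
      rw [indicator_of_notMem]
      simp only [mem_Iic]
      linarith

/-- In the norm `sup exp (-μ (t - t₀)) ‖·‖` the Duhamel operator is bounded by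
`∫₀ᵀ k(r) exp (-μ r) dr`. No measurability of `φ` is needed: the integral vanishes by convention
when its integrand is not integrable. -/
lemma duhamel_norm_le {T' : ℝ → W →L[ℝ] Y} {k : ℝ → ℝ} {T t₀ μ B : ℝ}
    (hki : IntegrableOn k (Ioc 0 T)) (hTk : ∀ r, 0 < r → ‖T' r‖ ≤ k r)
    (hB : 0 ≤ B) {φ : ℝ → W} {t : ℝ} (ht : t ∈ Icc t₀ (t₀ + T))
    (hφ : ∀ s ∈ Icc t₀ t, ‖φ s‖ ≤ B * Real.exp (μ * (s - t₀))) :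
    ‖∫ s in t₀..t, T' (t - s) (φ s)‖ ≤
      (∫ r in Ioc 0 T, k r * Real.exp (-(μ * r))) * B * Real.exp (μ * (t - t₀)) := by
  have hint : IntegrableOn (fun r => k r * Real.exp (-(μ * r))) (Ioc 0 T) := by
    rw [← integrableOn_Icc_iff_integrableOn_Ioc] at hki ⊢
    exact hki.mul_continuousOn (by fun_prop) isCompact_Icc
  have hnn : ∀ r, 0 < r → 0 ≤ k r * Real.exp (-(μ * r)) := fun r hr =>
    mul_nonneg ((norm_nonneg _).trans (hTk r hr)) (Real.exp_pos _).le
  have h0 : ∫ s in t₀..t, T' (t - s) (φ s) = ∫ r in (0 : ℝ)..(t - t₀), T' r (φ (t - r)) := by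
    rw [← sub_self t, ← intervalIntegral.integral_comp_sub_left (fun r => T' r (φ (t - r))) t]
    simp only [sub_sub_cancel]
  rw [h0, intervalIntegral.integral_of_le (by linarith [ht.1])]
  have hsub : Ioc 0 (t - t₀) ⊆ Ioc 0 T := Ioc_subset_Ioc_right (by linarith [ht.2])
  calc ‖∫ r in Ioc 0 (t - t₀), T' r (φ (t - r))‖
      ≤ ∫ r in Ioc 0 (t - t₀),
          k r * Real.exp (-(μ * r)) * (B * Real.exp (μ * (t - t₀))) := by
        refine norm_integral_le_of_norm_le ((hint.mono_set hsub).mul_const _) ?_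
        filter_upwards [ae_restrict_mem measurableSet_Ioc] with r hr
        have h1 := (T' r).le_of_opNorm_le_of_le (hTk r hr.1)
          (hφ (t - r) ⟨by linarith [hr.2], by linarith [hr.1]⟩)
        refine h1.trans (le_of_eq ?_)
        have : μ * (t - r - t₀) = -(μ * r) + μ * (t - t₀) := by ring
        rw [this, Real.exp_add]
        ring
    _ = (∫ r in Ioc 0 (t - t₀), k r * Real.exp (-(μ * r))) * (B * Real.exp (μ * (t - t₀))) :=
        integral_mul_const _ _
    _ ≤ (∫ r in Ioc 0 T, k r * Real.exp (-(μ * r))) * (B * Real.exp (μ * (t - t₀))) := by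
        refine mul_le_mul_of_nonneg_right ?_ (mul_nonneg hB (Real.exp_pos _).le)
        refine setIntegral_mono_set hint ?_ hsub.eventuallyLE
        filter_upwards [ae_restrict_mem measurableSet_Ioc] with r hr
        exact hnn r hr.1
    _ = _ := by ring

/-! ### Gronwall bound and existence -/

/-- Gronwall inequality for a weakly singular kernel: at a maximum point of
`exp (-μ (t - t₀)) ‖w t‖` the `1/2`-contraction absorbs the linear term. -/
lemma duhamel_gronwall {T' : ℝ → W →L[ℝ] Y} {k : ℝ → ℝ} {T t₀ μ L a b : ℝ} (hT : 0 ≤ T)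
    (hki : IntegrableOn k (Ioc 0 T)) (hTk : ∀ r, 0 < r → ‖T' r‖ ≤ k r)
    (hμ : 0 ≤ μ) (hL : 0 ≤ L) (hb : 0 ≤ b)
    (hq : (∫ r in Ioc 0 T, k r * Real.exp (-(μ * r))) * L ≤ 1 / 2)
    {w p : ℝ → Y} {φ : ℝ → W} (hw : ContinuousOn w (Icc t₀ (t₀ + T)))
    (hp : ∀ t ∈ Icc t₀ (t₀ + T), ‖p t‖ ≤ a)
    (hφ : ∀ t ∈ Icc t₀ (t₀ + T), ‖φ t‖ ≤ L * ‖w t‖ + b)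
    (heq : ∀ t ∈ Icc t₀ (t₀ + T), w t = p t + ∫ s in t₀..t, T' (t - s) (φ s)) :
    ∀ t ∈ Icc t₀ (t₀ + T), ‖w t‖ ≤
      2 * (a + (∫ r in Ioc 0 T, k r * Real.exp (-(μ * r))) * b) * Real.exp (μ * (t - t₀)) := by
  set q := ∫ r in Ioc 0 T, k r * Real.exp (-(μ * r)) with hqdef
  obtain ⟨t₁, ht₁, hmax⟩ := isCompact_Icc.exists_isMaxOn
    (nonempty_Icc.2 (by linarith : t₀ ≤ t₀ + T))
    (f := fun t => Real.exp (-(μ * (t - t₀))) * ‖w t‖)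
    (ContinuousOn.mul (by fun_prop) hw.norm)
  set m := Real.exp (-(μ * (t₁ - t₀))) * ‖w t₁‖ with hm
  have hm0 : 0 ≤ m := mul_nonneg (Real.exp_pos _).le (norm_nonneg _)
  have hwm : ∀ t ∈ Icc t₀ (t₀ + T), ‖w t‖ ≤ m * Real.exp (μ * (t - t₀)) := by
    intro t ht
    have h1 : Real.exp (-(μ * (t - t₀))) * ‖w t‖ ≤ m := hmax ht
    rwa [Real.exp_neg, ← div_eq_inv_mul, div_le_iff₀ (Real.exp_pos _)] at h1
  have hexp : ∀ t ∈ Icc t₀ (t₀ + T), 1 ≤ Real.exp (μ * (t - t₀)) := fun t ht =>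
    Real.one_le_exp (mul_nonneg hμ (by linarith [ht.1]))
  have h2 : ‖∫ s in t₀..t₁, T' (t₁ - s) (φ s)‖ ≤ q * (L * m + b) * Real.exp (μ * (t₁ - t₀)) := by
    refine duhamel_norm_le hki hTk (by positivity) ht₁ ?_
    intro s hs
    have hs' : s ∈ Icc t₀ (t₀ + T) := ⟨hs.1, hs.2.trans ht₁.2⟩
    have h3 := mul_le_mul_of_nonneg_left (hwm s hs') hL
    have h4 := mul_le_mul_of_nonneg_left (hexp s hs') hb
    linarith [hφ s hs']
  have ha : 0 ≤ a := (norm_nonneg _).trans (hp t₁ ht₁)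
  have h5 : ‖w t₁‖ ≤ (a + q * (L * m + b)) * Real.exp (μ * (t₁ - t₀)) := by
    rw [heq t₁ ht₁]
    have h4 := mul_le_mul_of_nonneg_left (hexp t₁ ht₁) ha
    linarith [norm_add_le (p t₁) (∫ s in t₀..t₁, T' (t₁ - s) (φ s)), hp t₁ ht₁]
  have h6 : m ≤ a + q * (L * m + b) := by
    have h5' := (div_le_iff₀ (Real.exp_pos _)).2 h5
    rwa [div_eq_inv_mul, ← Real.exp_neg, ← hm] at h5'
  have h7 : m ≤ 2 * (a + q * b) := by
    have := mul_le_mul_of_nonneg_right hq hm0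
    linarith
  intro t ht
  exact (hwm t ht).trans (mul_le_mul_of_nonneg_right h7 (Real.exp_pos _).le)

/-- Existence for a Duhamel equation whose nonlinearity vanishes at `0` and is Lipschitz on the ball
of radius `ρ`, with data so small that the solution stays there. It is a fixed point of a
`1/2`-contraction of the ball of radius `2 a` in the weighted supremum norm. -/
lemma duhamel_exists [CompleteSpace Y] {T' : ℝ → W →L[ℝ] Y} {k : ℝ → ℝ} {T t₀ μ L a ρ : ℝ}
    (hT : 0 ≤ T)
    (hkc : ContinuousOn k (Ioi 0)) (hki : IntegrableOn k (Ioc 0 T))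
    (hTk : ∀ r, 0 < r → ‖T' r‖ ≤ k r)
    (hTc : ∀ w : W, ContinuousOn (fun r => T' r w) (Ioi 0))
    (hμ : 0 ≤ μ) (hL : 0 ≤ L) (ha : 0 ≤ a)
    (hq : (∫ r in Ioc 0 T, k r * Real.exp (-(μ * r))) * L ≤ 1 / 2)
    {F : ℝ → Y → W}
    (hFc : ∀ z : ℝ → Y, ContinuousOn z (Icc t₀ (t₀ + T)) →
      ContinuousOn (fun s => F s (z s)) (Icc t₀ (t₀ + T)))
    (hF0 : ∀ s, F s 0 = 0)
    (hFL : ∀ s ∈ Icc t₀ (t₀ + T), ∀ y z : Y, ‖y‖ ≤ ρ → ‖z‖ ≤ ρ →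
      ‖F s y - F s z‖ ≤ L * ‖y - z‖)
    {p : ℝ → Y} (hpc : ContinuousOn p (Icc t₀ (t₀ + T)))
    (hp : ∀ t ∈ Icc t₀ (t₀ + T), ‖p t‖ ≤ a) (haρ : 2 * a * Real.exp (μ * T) ≤ ρ) :
    ∃ z : ℝ → Y, ContinuousOn z (Icc t₀ (t₀ + T)) ∧
      (∀ t ∈ Icc t₀ (t₀ + T), ‖z t‖ ≤ 2 * a * Real.exp (μ * T)) ∧
      (∀ t ∈ Icc t₀ (t₀ + T),
        IntervalIntegrable (fun s => T' (t - s) (F s (z s))) volume t₀ t) ∧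
      ∀ t ∈ Icc t₀ (t₀ + T), z t = p t + ∫ s in t₀..t, T' (t - s) (F s (z s)) := by
  set q := ∫ r in Ioc 0 T, k r * Real.exp (-(μ * r)) with hqdef
  have hab : t₀ ≤ t₀ + T := by linarith
  -- A point `u` of the function space encodes the candidate `Z u s = exp (μ (s - t₀)) • u s`.
  let Z : C(Icc t₀ (t₀ + T), Y) → ℝ → Y := fun u s =>
    Real.exp (μ * (s - t₀)) • u (projIcc t₀ (t₀ + T) hab s)
  have hZc : ∀ u, Continuous (Z u) := fun u => by
    have : Continuous fun s => u (projIcc t₀ (t₀ + T) hab s) :=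
      u.continuous.comp continuous_projIcc
    exact Continuous.smul (by fun_prop) this
  have hZn : ∀ u v s, ‖Z u s - Z v s‖ ≤ ‖u - v‖ * Real.exp (μ * (s - t₀)) := by
    intro u v s
    simp only [Z]
    rw [← smul_sub, norm_smul, Real.norm_eq_abs, Real.abs_exp, mul_comm]
    exact mul_le_mul_of_nonneg_right ((u - v).norm_coe_le_norm _) (Real.exp_pos _).le
  have hZ0 : ∀ u s, ‖Z u s‖ ≤ ‖u‖ * Real.exp (μ * (s - t₀)) := by
    intro u s
    simpa [Z] using hZn u 0 s
  have hexpT : ∀ t ∈ Icc t₀ (t₀ + T), Real.exp (μ * (t - t₀)) ≤ Real.exp (μ * T) := fun t ht =>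
    Real.exp_le_exp.2 (mul_le_mul_of_nonneg_left (by linarith [ht.2]) hμ)
  have hexp1 : ∀ t ∈ Icc t₀ (t₀ + T), 1 ≤ Real.exp (μ * (t - t₀)) := fun t ht =>
    Real.one_le_exp (mul_nonneg hμ (by linarith [ht.1]))
  have hZball : ∀ u, ‖u‖ ≤ 2 * a → ∀ t ∈ Icc t₀ (t₀ + T), ‖Z u t‖ ≤ 2 * a * Real.exp (μ * T) :=
    fun u hu t ht => (hZ0 u t).trans
      (mul_le_mul hu (hexpT t ht) (Real.exp_pos _).le (by linarith))
  have hZρ : ∀ u, ‖u‖ ≤ 2 * a → ∀ t ∈ Icc t₀ (t₀ + T), ‖Z u t‖ ≤ ρ :=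
    fun u hu t ht => (hZball u hu t ht).trans haρ
  let Ψ : C(Icc t₀ (t₀ + T), Y) → ℝ → Y := fun u t =>
    p t + ∫ s in t₀..t, T' (t - s) (F s (Z u s))
  have hΨc : ∀ u, ContinuousOn (Ψ u) (Icc t₀ (t₀ + T)) := fun u =>
    hpc.add (duhamel_continuousOn_s5 hT hkc hki hTk hTc (hFc _ (hZc u).continuousOn))
  have hint : ∀ u, ∀ t ∈ Icc t₀ (t₀ + T),
      IntervalIntegrable (fun s => T' (t - s) (F s (Z u s))) volume t₀ t := fun u t ht =>
    duhamel_intervalIntegrable hkc hki hTk hTc (hFc _ (hZc u).continuousOn) ht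
  let Φ : C(Icc t₀ (t₀ + T), Y) → C(Icc t₀ (t₀ + T), Y) := fun u =>
    ⟨fun t => Real.exp (-(μ * ((t : ℝ) - t₀))) • Ψ u t,
      Continuous.smul (by fun_prop) (continuousOn_iff_continuous_domRestrict.1 (hΨc u))⟩
  have hΦ_le : ∀ (t : ℝ) (y : Y) (c : ℝ), ‖y‖ ≤ c * Real.exp (μ * (t - t₀)) →
      ‖Real.exp (-(μ * (t - t₀))) • y‖ ≤ c := by
    intro t y c h
    rw [norm_smul, Real.norm_eq_abs, Real.abs_exp, Real.exp_neg, ← div_eq_inv_mul,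
      div_le_iff₀ (Real.exp_pos _)]
    exact h
  have hmaps : MapsTo Φ (Metric.closedBall 0 (2 * a)) (Metric.closedBall 0 (2 * a)) := by
    intro u hu
    rw [mem_closedBall_zero_iff] at hu ⊢
    refine (ContinuousMap.norm_le _ (by linarith)).2 fun t => hΦ_le t _ _ ?_
    have h1 : ‖∫ s in t₀..(t : ℝ), T' (t - s) (F s (Z u s))‖ ≤
        q * (L * (2 * a)) * Real.exp (μ * (t - t₀)) := by
      refine duhamel_norm_le hki hTk (by positivity) t.2 ?_
      intro s hs
      have hs' : s ∈ Icc t₀ (t₀ + T) := ⟨hs.1, hs.2.trans t.2.2⟩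
      have hρ0 : 0 ≤ ρ := (norm_nonneg _).trans (hZρ u hu s hs')
      have h2 := hFL s hs' (Z u s) 0 (hZρ u hu s hs') (by simpa using hρ0)
      rw [hF0, sub_zero, sub_zero] at h2
      have h3 := (hZ0 u s).trans (mul_le_mul_of_nonneg_right hu (Real.exp_pos _).le)
      have h4 := mul_le_mul_of_nonneg_left h3 hL
      linarith
    have h5 := mul_le_mul_of_nonneg_left (hexp1 t t.2) ha
    have h6 : q * (L * (2 * a)) ≤ a := by
      have := mul_le_mul_of_nonneg_right hq (by linarith : 0 ≤ 2 * a)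
      linarith
    have h7 := mul_le_mul_of_nonneg_right h6 (Real.exp_pos (μ * (t - t₀))).le
    have h8 : ‖Ψ u t‖ ≤ ‖p t‖ + ‖∫ s in t₀..(t : ℝ), T' (t - s) (F s (Z u s))‖ := norm_add_le _ _
    linarith [hp t t.2]
  have hcontr : ContractingWith (1 / 2 : NNReal) (hmaps.restrict Φ _ _) := by
    refine ⟨by rw [← NNReal.coe_lt_coe]; norm_num, LipschitzWith.of_dist_le_mul ?_⟩
    rintro ⟨u, hu⟩ ⟨v, hv⟩
    rw [mem_closedBall_zero_iff] at hu hv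
    simp only [Subtype.dist_eq, MapsTo.val_restrict_apply]
    rw [dist_eq_norm, dist_eq_norm]
    refine (ContinuousMap.norm_le _ (by positivity)).2 fun t => ?_
    have h0 : (Φ u - Φ v) t = Real.exp (-(μ * ((t : ℝ) - t₀))) • (Ψ u t - Ψ v t) := by
      rw [smul_sub]; rfl
    rw [h0]
    refine hΦ_le t _ _ ?_
    have h1 : Ψ u t - Ψ v t = ∫ s in t₀..(t : ℝ), T' (t - s) (F s (Z u s) - F s (Z v s)) := by
      simp only [Ψ, map_sub]
      rw [intervalIntegral.integral_sub (hint u t t.2) (hint v t t.2)]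
      abel
    rw [h1]
    have h2 : ‖∫ s in t₀..(t : ℝ), T' (t - s) (F s (Z u s) - F s (Z v s))‖ ≤
        q * (L * ‖u - v‖) * Real.exp (μ * (t - t₀)) := by
      refine duhamel_norm_le hki hTk (by positivity) t.2 ?_
      intro s hs
      have hs' : s ∈ Icc t₀ (t₀ + T) := ⟨hs.1, hs.2.trans t.2.2⟩
      have h2 := hFL s hs' (Z u s) (Z v s) (hZρ u hu s hs') (hZρ v hv s hs')
      have h4 := mul_le_mul_of_nonneg_left (hZn u v s) hL
      linarith
    refine h2.trans (mul_le_mul_of_nonneg_right ?_ (Real.exp_pos _).le)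
    have := mul_le_mul_of_nonneg_right hq (norm_nonneg (u - v))
    push_cast
    linarith
  obtain ⟨u, hu, hfix, -⟩ := hcontr.exists_fixedPoint' Metric.isClosed_closedBall.isComplete hmaps
    (x := 0) (by simpa using ha) (edist_ne_top _ _)
  rw [mem_closedBall_zero_iff] at hu
  refine ⟨Z u, (hZc u).continuousOn, hZball u hu, hint u, ?_⟩
  intro t ht
  have h1 : u ⟨t, ht⟩ = Real.exp (-(μ * (t - t₀))) • Ψ u t :=
    (congrArg (fun v : C(Icc t₀ (t₀ + T), Y) => v ⟨t, ht⟩) hfix).symm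
  change Real.exp (μ * (t - t₀)) • u (projIcc t₀ (t₀ + T) hab t) = Ψ u t
  rw [projIcc_of_mem hab ht, h1, smul_smul, ← Real.exp_add, add_neg_cancel, Real.exp_zero, one_smul]

end DuhamelKernel

/-! ### Differentiability in the initial datum -/

/-- Differentiability of the solution with respect to the initial datum.
Under the additional assumptions that `f(t,·)` is Fréchet differentiable with derivative
`Df(t,x) ∈ L(Y;W)` depending continuously on `(t,x)` and satisfying the quadratic Taylor
bound and the uniform bound, for every `R, T > 0` there exist `C₃(R,T) > 0` and
`λ₃(R,T) > 0` such that: whenever `x` is a mild solution on `[t₀, t₀+T]` with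
`‖x(t)‖ ≤ R` there, then
(i) for every `h⁰ ∈ Y` there is a unique continuous `h` on `[t₀, t₀+T]` with
`h t = S (t−t₀) h⁰ + ∫_{t₀}^t T' (t−s) (Df s (x s) (h s)) ds`;
(ii) for each `t`, the map `V t : h⁰ ↦ h(t)` is a bounded linear operator with
`‖V t‖ ≤ C₃(R,T)`;
(iii) for every `h⁰` with `‖h⁰‖ ≤ λ₃(R,T)` the mild solution `y` with
`y(t₀) = x(t₀) + h⁰` exists and satisfies `‖y t − x t − V t h⁰‖ ≤ C₃(R,T)‖h⁰‖²` on
`[t₀, t₀+T]`. -/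
theorem variational_equation_frechet_derivative
    {Y W : Type*} [NormedAddCommGroup Y] [NormedSpace ℝ Y] [CompleteSpace Y]
    [NormedAddCommGroup W] [NormedSpace ℝ W] [CompleteSpace W]
    (J : Y →L[ℝ] W) (hJ : Function.Injective J)
    (S : ℝ → Y →L[ℝ] Y)
    (hS0 : S 0 = ContinuousLinearMap.id ℝ Y)
    (hS_semigroup : ∀ s t : ℝ, 0 ≤ s → 0 ≤ t → S (t + s) = (S t).comp (S s))
    (hS_cont : ∀ y : Y, ContinuousOn (fun t => S t y) (Set.Ici (0 : ℝ)))
    (M₁ κ₁ : ℝ) (hM₁ : 0 < M₁) (hκ₁ : 0 < κ₁)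
    (hS_bound : ∀ t : ℝ, 0 ≤ t → ‖S t‖ ≤ M₁ * Real.exp (κ₁ * t))
    (T' : ℝ → W →L[ℝ] Y)
    (hT'J : ∀ t : ℝ, 0 < t → (T' t).comp J = S t)
    (hT'S : ∀ s t : ℝ, 0 < s → 0 < t → T' (t + s) = (S t).comp (T' s))
    (M₂ κ₂ γ : ℝ) (hM₂ : 0 < M₂) (hκ₂ : 0 < κ₂) (hγ0 : 0 ≤ γ) (hγ1 : γ < 1)
    (hT'_bound : ∀ t : ℝ, 0 < t → ‖T' t‖ ≤ M₂ * Real.exp (κ₂ * t) * t ^ (-γ))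
    (hT'_cont : ∀ w : W, ContinuousOn (fun t => T' t w) (Set.Ioi (0 : ℝ)))
    (f : ℝ → Y → W)
    (hf_cont : Continuous fun p : ℝ × Y => f p.1 p.2)
    (hf_lip : ∀ R : ℝ, 0 < R → ∃ C > (0 : ℝ), ∀ (t : ℝ) (x y : Y),
      ‖x‖ ≤ R → ‖y‖ ≤ R → ‖f t x - f t y‖ ≤ C * ‖x - y‖)
    (Df : ℝ → Y → Y →L[ℝ] W)
    (hDf : ∀ (t : ℝ) (x : Y), HasFDerivAt (f t) (Df t x) x)
    (hDf_cont : Continuous fun p : ℝ × Y => Df p.1 p.2)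
    (hDf_bound : ∀ R : ℝ, 0 < R → ∃ C₂ > (0 : ℝ), ∃ lam₂ > (0 : ℝ),
      (∀ (t : ℝ) (x h : Y), ‖x‖ ≤ R → ‖h‖ ≤ lam₂ →
        ‖f t (x + h) - f t x - Df t x h‖ ≤ C₂ * ‖h‖ ^ 2) ∧
      (∀ (t : ℝ) (x : Y), ‖x‖ ≤ R → ‖Df t x‖ ≤ C₂)) :
    ∀ R T : ℝ, 0 < R → 0 < T → ∃ C₃ > (0 : ℝ), ∃ lam₃ > (0 : ℝ),
      ∀ (t₀ : ℝ) (x0 : Y) (x : ℝ → Y),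
        IsMildSolution S T' f t₀ T x0 x →
        (∀ t ∈ Set.Icc t₀ (t₀ + T), ‖x t‖ ≤ R) →
        ∃ V : ℝ → Y →L[ℝ] Y,
          -- (i) existence and uniqueness of the solution of the variational equation
          (∀ h0 : Y,
            (ContinuousOn (fun t => V t h0) (Set.Icc t₀ (t₀ + T)) ∧
              (∀ t ∈ Set.Icc t₀ (t₀ + T),
                IntervalIntegrable (fun s => T' (t - s) (Df s (x s) (V s h0)))
                  MeasureTheory.volume t₀ t) ∧
              ∀ t ∈ Set.Icc t₀ (t₀ + T),
                V t h0 = S (t - t₀) h0 + ∫ s in t₀..t, T' (t - s) (Df s (x s) (V s h0))) ∧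
            ∀ h : ℝ → Y,
              ContinuousOn h (Set.Icc t₀ (t₀ + T)) →
              (∀ t ∈ Set.Icc t₀ (t₀ + T),
                IntervalIntegrable (fun s => T' (t - s) (Df s (x s) (h s)))
                  MeasureTheory.volume t₀ t) →
              (∀ t ∈ Set.Icc t₀ (t₀ + T),
                h t = S (t - t₀) h0 + ∫ s in t₀..t, T' (t - s) (Df s (x s) (h s))) →
              Set.EqOn h (fun t => V t h0) (Set.Icc t₀ (t₀ + T))) ∧
          -- (ii) uniform bound on the operator norm
          (∀ t ∈ Set.Icc t₀ (t₀ + T), ‖V t‖ ≤ C₃) ∧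
          -- (iii) quadratic estimate: V is the derivative of the flow at x0
          (∀ h0 : Y, ‖h0‖ ≤ lam₃ →
            ∃ y : ℝ → Y, IsMildSolution S T' f t₀ T (x0 + h0) y ∧
              ∀ t ∈ Set.Icc t₀ (t₀ + T),
                ‖y t - x t - V t h0‖ ≤ C₃ * ‖h0‖ ^ 2) := by
  intro R T hR hT
  obtain ⟨C, hC, hfL⟩ := hf_lip (R + 1) (by linarith)
  obtain ⟨C₂, hC₂, lam₂, hlam₂, hTaylor, hDfb⟩ := hDf_bound R hR
  set k : ℝ → ℝ := fun r => M₂ * Real.exp (κ₂ * r) * r ^ (-γ) with hk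
  have hkc : ContinuousOn k (Ioi 0) := by
    refine ContinuousOn.mul (by fun_prop) ?_
    exact continuousOn_id.rpow_const fun r hr => Or.inl (ne_of_gt hr)
  have hki : IntegrableOn k (Ioc 0 T) := by
    have h1 : IntervalIntegrable (fun r : ℝ => r ^ (-γ)) volume 0 T :=
      intervalIntegral.intervalIntegrable_rpow' (by linarith)
    exact (intervalIntegrable_iff_integrableOn_Ioc_of_le hT.le).1
      (h1.continuousOn_mul (g := fun r => M₂ * Real.exp (κ₂ * r)) (by fun_prop))
  -- A common Lipschitz constant for the nonlinear and the linearized problem.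
  set L := C + C₂ with hLdef
  have hL : 0 ≤ L := by positivity
  obtain ⟨μ, hμ, hq⟩ := exists_weight hki L
  set q := ∫ r in Ioc 0 T, k r * Real.exp (-(μ * r)) with hqdef
  have hq0 : 0 ≤ q := setIntegral_nonneg measurableSet_Ioc fun r hr =>
    mul_nonneg ((norm_nonneg _).trans (hT'_bound r hr.1)) (Real.exp_pos _).le
  set M := M₁ * Real.exp (κ₁ * T) with hM
  have hMpos : 0 < M := by positivity
  set E := Real.exp (μ * T) with hE
  have hEpos : 0 < E := Real.exp_pos _
  -- `A * ‖h0‖` bounds both the linearized solution and the perturbation with initial datum `h0`.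
  set A := 2 * M * E with hA
  have hApos : 0 < A := by positivity
  refine ⟨A + 2 * (q * (C₂ * A ^ 2)) * E, by positivity, min 1 lam₂ / A,
    div_pos (lt_min one_pos hlam₂) hApos, ?_⟩
  rintro t₀ x0 x ⟨hxc, hx0, hxi, hxe⟩ hxR
  have ht₀ : t₀ ∈ Icc t₀ (t₀ + T) := ⟨le_rfl, by linarith⟩
  have hexpE : ∀ t ∈ Icc t₀ (t₀ + T), Real.exp (μ * (t - t₀)) ≤ E := fun t ht =>
    Real.exp_le_exp.2 (mul_le_mul_of_nonneg_left (by linarith [ht.2]) hμ)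
  have hpc : ∀ h0 : Y, ContinuousOn (fun t => S (t - t₀) h0) (Icc t₀ (t₀ + T)) := fun h0 =>
    (hS_cont h0).comp (by fun_prop) fun t ht => sub_nonneg.2 ht.1
  have hp : ∀ h0 : Y, ∀ t ∈ Icc t₀ (t₀ + T), ‖S (t - t₀) h0‖ ≤ M * ‖h0‖ := by
    intro h0 t ht
    refine (S (t - t₀)).le_of_opNorm_le ((hS_bound _ (sub_nonneg.2 ht.1)).trans ?_) h0
    refine mul_le_mul_of_nonneg_left (Real.exp_le_exp.2 ?_) hM₁.le
    exact mul_le_mul_of_nonneg_left (by linarith [ht.2]) hκ₁.le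
  have hDfL : ∀ s ∈ Icc t₀ (t₀ + T), ∀ z : Y, ‖Df s (x s) z‖ ≤ L * ‖z‖ := fun s hs z =>
    (Df s (x s)).le_of_opNorm_le ((hDfb s (x s) (hxR s hs)).trans (by linarith)) z
  have hDfc : ContinuousOn (fun s => Df s (x s)) (Icc t₀ (t₀ + T)) :=
    hDf_cont.comp_continuousOn (continuousOn_id.prodMk hxc)
  -- Solutions of the variational equation for each initial datum.
  have hlin : ∀ h0 : Y, ∃ z : ℝ → Y, ContinuousOn z (Icc t₀ (t₀ + T)) ∧
      (∀ t ∈ Icc t₀ (t₀ + T), ‖z t‖ ≤ 2 * (M * ‖h0‖) * E) ∧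
      (∀ t ∈ Icc t₀ (t₀ + T),
        IntervalIntegrable (fun s => T' (t - s) (Df s (x s) (z s))) volume t₀ t) ∧
      ∀ t ∈ Icc t₀ (t₀ + T),
        z t = S (t - t₀) h0 + ∫ s in t₀..t, T' (t - s) (Df s (x s) (z s)) := by
    intro h0
    refine duhamel_exists (F := fun s z => Df s (x s) z) hT.le hkc hki hT'_bound hT'_cont hμ hL
      (by positivity) hq (fun z hz => hDfc.clm_apply hz) (fun s => map_zero _) ?_ (hpc h0) (hp h0)
      le_rfl
    intro s hs y z _ _
    rw [← map_sub]
    exact hDfL s hs _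
  have huniq : ∀ (h0 : Y) (y z : ℝ → Y), ContinuousOn y (Icc t₀ (t₀ + T)) →
      ContinuousOn z (Icc t₀ (t₀ + T)) →
      (∀ t ∈ Icc t₀ (t₀ + T),
        IntervalIntegrable (fun s => T' (t - s) (Df s (x s) (y s))) volume t₀ t) →
      (∀ t ∈ Icc t₀ (t₀ + T),
        IntervalIntegrable (fun s => T' (t - s) (Df s (x s) (z s))) volume t₀ t) →
      (∀ t ∈ Icc t₀ (t₀ + T),
        y t = S (t - t₀) h0 + ∫ s in t₀..t, T' (t - s) (Df s (x s) (y s))) →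
      (∀ t ∈ Icc t₀ (t₀ + T),
        z t = S (t - t₀) h0 + ∫ s in t₀..t, T' (t - s) (Df s (x s) (z s))) →
      EqOn y z (Icc t₀ (t₀ + T)) := by
    intro h0 y z hyc hzc hyi hzi hye hze t ht
    have h1 := duhamel_gronwall (w := fun t => y t - z t) (p := fun _ => 0)
      (φ := fun s => Df s (x s) (y s - z s)) (a := 0) (b := 0) hT.le hki hT'_bound hμ hL le_rfl hq
      (hyc.sub hzc) (fun t _ => by simp) (fun s hs => by simpa using hDfL s hs (y s - z s))
      (fun t ht => by
        simp only [map_sub]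
        rw [intervalIntegral.integral_sub (hyi t ht) (hzi t ht)]
        nth_rewrite 1 [hye t ht, hze t ht]
        abel) t ht
    simp only [mul_zero, add_zero, zero_mul, norm_le_zero_iff] at h1
    exact sub_eq_zero.1 h1
  choose v hvc hvb hvi hve using hlin
  have hvadd : ∀ a b : Y, ∀ t ∈ Icc t₀ (t₀ + T), v (a + b) t = v a t + v b t := by
    intro a b
    refine huniq (a + b) _ (fun t => v a t + v b t) (hvc _) ((hvc a).add (hvc b)) (hvi _) ?_
      (hve _) ?_
    · intro t ht
      simp only [map_add]
      exact (hvi a t ht).add (hvi b t ht)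
    · intro t ht
      simp only [map_add]
      rw [intervalIntegral.integral_add (hvi a t ht) (hvi b t ht)]
      nth_rewrite 1 [hve a t ht, hve b t ht]
      abel
  have hvsmul : ∀ (c : ℝ) (a : Y), ∀ t ∈ Icc t₀ (t₀ + T), v (c • a) t = c • v a t := by
    intro c a
    refine huniq (c • a) _ (fun t => c • v a t) (hvc _) ((hvc a).const_smul c) (hvi _) ?_
      (hve _) ?_
    · intro t ht
      simp only [map_smul]
      exact (hvi a t ht).smul c
    · intro t ht
      simp only [map_smul]
      rw [intervalIntegral.integral_smul, ← smul_add]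
      nth_rewrite 1 [hve a t ht]
      rfl
  have hV : ∀ t, ∃ Vt : Y →L[ℝ] Y, t ∈ Icc t₀ (t₀ + T) → (∀ h0, Vt h0 = v h0 t) ∧ ‖Vt‖ ≤ A := by
    intro t
    by_cases ht : t ∈ Icc t₀ (t₀ + T)
    · refine ⟨LinearMap.mkContinuous
        { toFun := fun h0 => v h0 t
          map_add' := fun a b => hvadd a b t ht
          map_smul' := fun c a => hvsmul c a t ht } A ?_, fun _ => ⟨fun _ => rfl, ?_⟩⟩
      · intro h0
        refine (hvb h0 t ht).trans (le_of_eq ?_)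
        rw [hA]
        ring
      · exact LinearMap.mkContinuous_norm_le _ hApos.le _
    · exact ⟨0, fun h => absurd h ht⟩
  choose V hV using hV
  have hVv : ∀ h0, ∀ t ∈ Icc t₀ (t₀ + T), V t h0 = v h0 t := fun h0 t ht => (hV t ht).1 h0
  have hcongr : ∀ h0, ∀ t ∈ Icc t₀ (t₀ + T), ∀ s ∈ Icc t₀ t,
      T' (t - s) (Df s (x s) (V s h0)) = T' (t - s) (Df s (x s) (v h0 s)) := by
    intro h0 t ht s hs
    rw [hVv h0 s ⟨hs.1, hs.2.trans ht.2⟩]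
  have hVc : ∀ h0, ContinuousOn (fun t => V t h0) (Icc t₀ (t₀ + T)) := fun h0 =>
    (hvc h0).congr (hVv h0)
  have hVi : ∀ h0, ∀ t ∈ Icc t₀ (t₀ + T),
      IntervalIntegrable (fun s => T' (t - s) (Df s (x s) (V s h0))) volume t₀ t := by
    intro h0 t ht
    refine (hvi h0 t ht).congr ?_
    intro s hs
    rw [uIoc_of_le ht.1] at hs
    exact (hcongr h0 t ht s ⟨hs.1.le, hs.2⟩).symm
  have hVe : ∀ h0, ∀ t ∈ Icc t₀ (t₀ + T),
      V t h0 = S (t - t₀) h0 + ∫ s in t₀..t, T' (t - s) (Df s (x s) (V s h0)) := by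
    intro h0 t ht
    rw [hVv h0 t ht, hve h0 t ht]
    congr 1
    refine intervalIntegral.integral_congr ?_
    intro s hs
    rw [uIcc_of_le ht.1] at hs
    exact (hcongr h0 t ht s hs).symm
  refine ⟨V, fun h0 => ⟨⟨hVc h0, hVi h0, hVe h0⟩, ?_⟩, ?_, ?_⟩
  · intro h hc hi he
    exact huniq h0 h _ hc (hVc h0) hi (hVi h0) he (hVe h0)
  · intro t ht
    refine (hV t ht).2.trans (le_add_of_nonneg_right (by positivity))
  · intro h0 hh0
    have hAh : A * ‖h0‖ ≤ min 1 lam₂ := by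
      rw [mul_comm]
      exact (le_div_iff₀ hApos).1 hh0
    have hAeq : 2 * (M * ‖h0‖) * E = A * ‖h0‖ := by
      rw [hA]
      ring
    -- `λ₃ = min 1 λ₂ / A` keeps the perturbation in the unit ball, where `f (s, x s + ·)` is
    -- Lipschitz, and in the range of the Taylor bound. The perturbation `z = y - x`
    -- solves the Duhamel equation with nonlinearity `F`.
    set F : ℝ → Y → W := fun s z => f s (x s + z) - f s (x s) with hF
    have hFc : ∀ z : ℝ → Y, ContinuousOn z (Icc t₀ (t₀ + T)) →
        ContinuousOn (fun s => F s (z s)) (Icc t₀ (t₀ + T)) := fun z hz =>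
      (hf_cont.comp_continuousOn (continuousOn_id.prodMk (hxc.add hz))).sub
        (hf_cont.comp_continuousOn (continuousOn_id.prodMk hxc))
    obtain ⟨z, hzc, hzb, hzi, hze⟩ := duhamel_exists (F := F) (ρ := 1) hT.le hkc hki hT'_bound
      hT'_cont hμ hL (by positivity : 0 ≤ M * ‖h0‖) hq hFc (fun s => by simp [hF])
      (by
        intro s hs y z hy hz
        simp only [hF, sub_sub_sub_cancel_right]
        have h1 := hfL s (x s + y) (x s + z)
          ((norm_add_le _ _).trans (add_le_add (hxR s hs) hy))
          ((norm_add_le _ _).trans (add_le_add (hxR s hs) hz))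
        rw [add_sub_add_left_eq_sub] at h1
        exact h1.trans (mul_le_mul_of_nonneg_right (by linarith) (norm_nonneg _)))
      (hpc h0) (hp h0) (by rw [← hE, hAeq]; exact hAh.trans (min_le_left _ _))
    rw [← hE, hAeq] at hzb
    have hfi : ∀ t, (fun s => T' (t - s) (f s (x s + z s))) =
        fun s => T' (t - s) (f s (x s)) + T' (t - s) (F s (z s)) := by
      intro t
      funext s
      rw [← map_add, hF, add_sub_cancel]
    refine ⟨fun t => x t + z t, ⟨hxc.add hzc, ?_, ?_, ?_⟩, ?_⟩
    · have h1 := hze t₀ ht₀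
      simp only [sub_self, hS0, intervalIntegral.integral_same, add_zero,
        ContinuousLinearMap.id_apply] at h1
      simp only [hx0, h1]
    · intro t ht
      simp only [hfi t]
      exact (hxi t ht).add (hzi t ht)
    · intro t ht
      simp only [hfi t]
      rw [intervalIntegral.integral_add (hxi t ht) (hzi t ht), map_add]
      nth_rewrite 1 [hxe t ht, hze t ht]
      abel
    · intro t ht
      have h1 := duhamel_gronwall (w := fun t => z t - V t h0) (p := fun _ => 0)
        (φ := fun s => F s (z s) - Df s (x s) (V s h0)) (a := 0) (b := C₂ * (A * ‖h0‖) ^ 2)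
        hT.le hki hT'_bound hμ hL (by positivity) hq (hzc.sub (hVc h0)) (fun t _ => by simp)
        (by
          intro s hs
          have hz2 := hTaylor s (x s) (z s) (hxR s hs)
            ((hzb s hs).trans (hAh.trans (min_le_right _ _)))
          have hsplit : F s (z s) - Df s (x s) (V s h0) =
              Df s (x s) (z s - V s h0) + (f s (x s + z s) - f s (x s) - Df s (x s) (z s)) := by
            simp only [map_sub, hF]
            abel
          rw [hsplit]
          refine (norm_add_le _ _).trans (add_le_add (hDfL s hs _) (hz2.trans ?_))
          exact mul_le_mul_of_nonneg_left (pow_le_pow_left₀ (norm_nonneg _) (hzb s hs) 2) hC₂.le)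
        (fun t ht => by
          simp only [map_sub]
          rw [intervalIntegral.integral_sub (hzi t ht) (hVi h0 t ht)]
          nth_rewrite 1 [hze t ht, hVe h0 t ht]
          abel) t ht
      simp only [← hqdef, zero_add] at h1
      simp only [add_sub_cancel_left]
      calc ‖z t - V t h0‖ ≤ 2 * (q * (C₂ * (A * ‖h0‖) ^ 2)) * Real.exp (μ * (t - t₀)) := h1
        _ ≤ 2 * (q * (C₂ * (A * ‖h0‖) ^ 2)) * E :=
            mul_le_mul_of_nonneg_left (hexpE t ht) (by positivity)
        _ = 2 * (q * (C₂ * A ^ 2)) * E * ‖h0‖ ^ 2 := by ring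
        _ ≤ (A + 2 * (q * (C₂ * A ^ 2)) * E) * ‖h0‖ ^ 2 :=
            mul_le_mul_of_nonneg_right (by linarith) (by positivity)
end

section
/- Let γ ∈ [0,1). For every ε > 0 and every κ > 0 there exists α ≥ κ such that for all real t₀ ≤ t one has ∫_{t₀}^t (t − s)^{−γ} e^{α(s − t₀)} ds ≤ ε e^{α(t − t₀)}. -/
/-!
Substituting `u = t - s`, the integral becomes
`e^{α(t-t₀)} ∫_0^{t-t₀} u^{-γ} e^{-αu} du`. The last factor is at most the same integral over
`(0, ∞)`, namely `α^{γ-1} Γ(1-γ)`, which does not depend on `t₀` and `t` and tends to `0` as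
`α → ∞` because `γ < 1`.
-/

open MeasureTheory Set Filter Topology in
/-- The left-hand side is bounded, up to the factor `e^{α(t-t₀)}`, by a full Gamma integral,
uniformly in `t₀ ≤ t`. -/
theorem integral_rpow_exp_le_Gamma {γ α t₀ t : ℝ} (hγ1 : γ < 1) (hα : 0 < α) (ht : t₀ ≤ t) :
    (∫ s in t₀..t, (t - s) ^ (-γ) * Real.exp (α * (s - t₀))) ≤
      α ^ (-(1 - γ)) * Real.Gamma (1 - γ) * Real.exp (α * (t - t₀)) := by
  have hsub : (∫ s in t₀..t, (t - s) ^ (-γ) * Real.exp (α * (s - t₀))) =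
      (∫ u in (0 : ℝ)..(t - t₀), u ^ (-γ) * Real.exp (-α * u)) * Real.exp (α * (t - t₀)) := by
    have h := intervalIntegral.integral_comp_sub_left (a := t₀) (b := t)
      (fun u : ℝ => u ^ (-γ) * Real.exp (-α * u) * Real.exp (α * (t - t₀))) t
    rw [sub_self] at h
    rw [← intervalIntegral.integral_mul_const, ← h]
    congr 1
    funext s
    rw [mul_assoc, ← Real.exp_add]
    congr 2
    ring
  have hint : IntegrableOn (fun u : ℝ => u ^ (-γ) * Real.exp (-α * u)) (Ioi 0) := by
    simpa using integrableOn_rpow_mul_exp_neg_mul_rpow (p := 1) (s := -γ) (b := α)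
      (by linarith) one_pos hα
  have hval : (∫ u in Ioi (0 : ℝ), u ^ (-γ) * Real.exp (-α * u)) =
      α ^ (-(1 - γ)) * Real.Gamma (1 - γ) := by
    have h := integral_rpow_mul_exp_neg_mul_rpow (p := 1) (q := -γ) (b := α)
      one_pos (by linarith) hα
    simp only [Real.rpow_one, div_one, mul_one] at h
    rw [h, show -γ + 1 = 1 - γ by ring]
  rw [hsub, ← hval, intervalIntegral.integral_of_le (sub_nonneg.2 ht)]
  refine mul_le_mul_of_nonneg_right ?_ (Real.exp_pos _).le
  refine setIntegral_mono_set hint ?_ Ioc_subset_Ioi_self.eventuallyLE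
  filter_upwards [ae_restrict_mem measurableSet_Ioi] with u hu
  exact mul_nonneg (Real.rpow_nonneg (le_of_lt hu) _) (Real.exp_pos _).le

/-- Let `γ ∈ [0,1)`.  For every `ε > 0` and every `κ > 0` there exists
`α ≥ κ` such that for all real `t₀ ≤ t`,
`∫_{t₀}^t (t − s)^{−γ} e^{α(s−t₀)} ds ≤ ε e^{α(t−t₀)}`. -/
theorem exists_exponent_integral_rpow_exp_le
    (γ : ℝ) (hγ0 : 0 ≤ γ) (hγ1 : γ < 1) :
    ∀ ε : ℝ, 0 < ε → ∀ κ : ℝ, 0 < κ → ∃ α : ℝ, κ ≤ α ∧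
      ∀ t₀ t : ℝ, t₀ ≤ t →
        (∫ s in t₀..t, (t - s) ^ (-γ) * Real.exp (α * (s - t₀))) ≤
          ε * Real.exp (α * (t - t₀)) := by
  intro ε hε κ hκ
  have hlim : Filter.Tendsto (fun α : ℝ => α ^ (-(1 - γ)) * Real.Gamma (1 - γ))
      Filter.atTop (nhds 0) := by
    simpa only [zero_mul] using
      (tendsto_rpow_neg_atTop (sub_pos.2 hγ1)).mul_const (Real.Gamma (1 - γ))
  obtain ⟨α, hαε, hκα⟩ :=
    ((hlim.eventually_lt_const hε).and (Filter.eventually_ge_atTop κ)).exists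
  refine ⟨α, hκα, fun t₀ t ht => ?_⟩
  exact (integral_rpow_exp_le_Gamma hγ1 (hκ.trans_le hκα) ht).trans
    (mul_le_mul_of_nonneg_right hαε.le (Real.exp_pos _).le)
end
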